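/- Let R be a commutative noetherian ring with identity and a a proper ideal of R with dim R/a ≤ 2, and let M be an R-module with Supp_R M ⊆ V(a). Then M is a-cofinite if and only if Hom_R(R/a, M), Ext^1_R(R/a, M) and Ext^2_R(R/a, M) are finitely generated R-modules. -/

import Mathlib

universe u

open CategoryTheory

/-- `Ext^i_R(R/a, M)` as an `R`-module, for `M : ModuleCat R`. -/
noncomputable def extQuot {R : Type u} [CommRing R] (a : Ideal R) (i : ℕ)
    (M : ModuleCat.{u} R) : ModuleCat.{u} R :=
  ((Ext R (ModuleCat.{u} R) i).obj (Opposite.op (ModuleCat.of R (R ⧸ a)))).obj M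

/-- An `R`-module `M` is `a`-cofinite if `Supp M ⊆ V(a)` and `Ext^i_R(R/a, M)` is a
finitely generated `R`-module for every `i ≥ 0`. -/
def IsCofinite {R : Type u} [CommRing R] (a : Ideal R) (M : ModuleCat.{u} R) : Prop :=
  Module.support R M ⊆ PrimeSpectrum.zeroLocus (a : Set R) ∧
    ∀ i : ℕ, Module.Finite R (extQuot a i M)

/-!
Write `X` for one of the modules `Ext^j(R/a, M)`. If `dim R/(a + y) ≤ 1`, the case of dimension at
most one, applied to `0 :_M y` and `M/yM`, shows that `0 :_X y` is finitely generated. Applied after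
localization, the same case controls `X` at the nonmaximal primes, and by Melkersson's criterion `X`
is artinian modulo a finitely generated submodule `F`. If `X/F` were not finitely generated, it
would contain a submodule `D` which is not finitely generated although all its proper submodules
are. Such a `D` is power torsion for a maximal ideal `m`, and therefore also a module over the
`m`-adic completion `S` of `R`. Over the complete ring `S`, a form of Nakayama's lemma shows that
`End D` is finitely generated, which forces `dim S/Ann D ≤ 1`. Hence `Ann D` contains a `y` with
`dim S/(aS + y) ≤ 1`, and `D` lies in the kernel of `y` on `S ⊗ X/F`. This kernel is finitely
generated, by the first step over `S`: a contradiction.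
-/

namespace Cofiniteness

open Abelian

section ExtModule

variable {R : Type u} [CommRing R]
  {N M A B C : Type u} [AddCommGroup N] [Module R N] [AddCommGroup M] [Module R M]
  [AddCommGroup A] [Module R A] [AddCommGroup B] [Module R B] [AddCommGroup C] [Module R C]

variable (R N M) in
/-- The `R`-module `Ext^i_R(N, M)` of two unbundled modules, as a group of morphisms in the derived
category: unlike the derived functor used in `extQuot`, this version comes with Yoneda products and
with long exact sequences in both variables. -/
abbrev ExtModule (i : ℕ) : Type u :=
  Abelian.Ext (ModuleCat.of R N) (ModuleCat.of R M) i

namespace ExtModule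

variable (N) in
/-- The map `Ext^i_R(N, A) → Ext^i_R(N, B)` induced by `f : A → B`. -/
noncomputable def postcomp (f : A →ₗ[R] B) (i : ℕ) : ExtModule R N A i →ₗ[R] ExtModule R N B i :=
  (Ext.mk₀ (ModuleCat.ofHom f)).postcompOfLinear R (ModuleCat.of R N) (add_zero i)

variable (M) in
/-- The map `Ext^i_R(B, M) → Ext^i_R(A, M)` induced by `f : A → B`. -/
noncomputable def precomp (f : A →ₗ[R] B) (i : ℕ) : ExtModule R B M i →ₗ[R] ExtModule R A M i :=
  (Ext.mk₀ (ModuleCat.ofHom f)).precompOfLinear R (ModuleCat.of R M) (zero_add i)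

lemma postcomp_apply (f : A →ₗ[R] B) (i : ℕ) (x : ExtModule R N A i) :
    postcomp N f i x = x.comp (Ext.mk₀ (ModuleCat.ofHom f)) (add_zero i) := rfl

lemma precomp_apply (f : A →ₗ[R] B) (i : ℕ) (x : ExtModule R B M i) :
    precomp M f i x = (Ext.mk₀ (ModuleCat.ofHom f)).comp x (zero_add i) := rfl

lemma postcomp_comp (f : A →ₗ[R] B) (g : B →ₗ[R] C) (i : ℕ) :
    postcomp N (g ∘ₗ f) i = postcomp N g i ∘ₗ postcomp N f i := by
  ext x
  simp [postcomp_apply, Ext.mk₀_comp_mk₀]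

lemma precomp_comp (f : A →ₗ[R] B) (g : B →ₗ[R] C) (i : ℕ) :
    precomp M (g ∘ₗ f) i = precomp M f i ∘ₗ precomp M g i := by
  ext x
  simp [precomp_apply]

lemma postcomp_zero (i : ℕ) : postcomp N (0 : A →ₗ[R] B) i = 0 := by
  ext x
  simp [postcomp_apply]

lemma precomp_zero (i : ℕ) : precomp M (0 : A →ₗ[R] B) i = 0 := by
  ext x
  simp [precomp_apply]

lemma postcomp_lsmul (y : R) (i : ℕ) :
    postcomp N (LinearMap.lsmul R M y) i = LinearMap.lsmul R (ExtModule R N M i) y :=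
  LinearMap.ext fun x ↦ (x.smul_eq_comp_mk₀ y).symm

lemma precomp_lsmul (y : R) (i : ℕ) :
    precomp M (LinearMap.lsmul R N y) i = LinearMap.lsmul R (ExtModule R N M i) y := by
  ext x
  change (Ext.mk₀ (y • 𝟙 (ModuleCat.of R N))).comp x (zero_add i) = y • x
  rw [Ext.mk₀_smul, Ext.smul_comp, Ext.mk₀_id_comp]

lemma smul_eq_zero_of_left {y : R} (hy : ∀ n : N, y • n = 0) {i : ℕ} (x : ExtModule R N M i) :
    y • x = 0 := by
  have hy' : LinearMap.lsmul R N y = 0 := LinearMap.ext hy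
  rw [← LinearMap.lsmul_apply y x, ← precomp_lsmul, hy', precomp_zero, LinearMap.zero_apply]

lemma subsingleton_of_left [Subsingleton N] (i : ℕ) : Subsingleton (ExtModule R N M i) :=
  subsingleton_of_forall_eq 0 fun x ↦ by
    rw [← one_smul R x, smul_eq_zero_of_left fun n ↦ Subsingleton.elim _ 0]

lemma postcomp_zero_injective {f : A →ₗ[R] B} (hf : Function.Injective f) :
    Function.Injective (postcomp N f 0) := by
  have : Mono (ModuleCat.ofHom f) := (ModuleCat.mono_iff_injective _).mpr hf
  exact Ext.postcomp_mk₀_injective_of_mono (ModuleCat.of R N) (ModuleCat.ofHom f)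

lemma precomp_zero_injective {f : A →ₗ[R] B} (hf : Function.Surjective f) :
    Function.Injective (precomp M f 0) := by
  have : Epi (ModuleCat.ofHom f) := (ModuleCat.epi_iff_surjective _).mpr hf
  exact Ext.precomp_mk₀_injective_of_epi (ModuleCat.of R M) (ModuleCat.ofHom f)

lemma subsingleton_succ_of_projective [Module.Projective R N] (i : ℕ) :
    Subsingleton (ExtModule R N M (i + 1)) :=
  subsingleton_of_forall_eq 0 Ext.eq_zero_of_projective

variable (R N M) in
/-- The identification of `Ext^0_R(N, M)` with `Hom_R(N, M)`. -/
noncomputable def zeroEquiv : ExtModule R N M 0 ≃ₗ[R] (N →ₗ[R] M) :=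
  Ext.linearEquiv₀.trans ModuleCat.homLinearEquiv

lemma zeroEquiv_precomp (f : A →ₗ[R] B) (x : ExtModule R B M 0) :
    zeroEquiv R A M (precomp M f 0 x) = zeroEquiv R B M x ∘ₗ f := by
  obtain ⟨g, rfl⟩ := (zeroEquiv R B M).symm.surjective x
  rw [LinearEquiv.apply_symm_apply, ← LinearEquiv.eq_symm_apply]
  exact Ext.mk₀_comp_mk₀ (ModuleCat.ofHom f) (ModuleCat.ofHom g)

section LongExactSequence

variable {f : A →ₗ[R] B} {g : B →ₗ[R] C}

lemma shortExact_of_exact (hf : Function.Injective f) (hfg : Function.Exact f g)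
    (hg : Function.Surjective g) :
    (ModuleCat.shortComplexOfCompEqZero f g hfg.linearMap_comp_eq_zero).ShortExact where
  exact := (ShortComplex.ShortExact.moduleCat_exact_iff_function_exact _).mpr hfg
  mono_f := (ModuleCat.mono_iff_injective _).mpr hf
  epi_g := (ModuleCat.epi_iff_surjective _).mpr hg

variable (hf : Function.Injective f) (hfg : Function.Exact f g) (hg : Function.Surjective g)
include hf hfg hg

lemma exact_postcomp (i : ℕ) : Function.Exact (postcomp N f i) (postcomp N g i) :=
  LinearMap.exact_of_comp_eq_zero_of_ker_le_range
    (by rw [← postcomp_comp, hfg.linearMap_comp_eq_zero, postcomp_zero])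
    fun x hx ↦ Ext.covariant_sequence_exact₂ _ (shortExact_of_exact hf hfg hg) x hx

lemma exact_precomp (i : ℕ) : Function.Exact (precomp M g i) (precomp M f i) :=
  LinearMap.exact_of_comp_eq_zero_of_ker_le_range
    (by rw [← precomp_comp, hfg.linearMap_comp_eq_zero, precomp_zero])
    fun x hx ↦ Ext.contravariant_sequence_exact₂ (shortExact_of_exact hf hfg hg) _ x hx

lemma exists_exact_postcomp_connecting (i : ℕ) :
    ∃ δ : ExtModule R N C i →ₗ[R] ExtModule R N A (i + 1),
      Function.Exact (postcomp N g i) δ ∧ Function.Exact δ (postcomp N f (i + 1)) := by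
  have S := shortExact_of_exact hf hfg hg
  refine ⟨S.extClass.postcompOfLinear R (ModuleCat.of R N) rfl,
    LinearMap.exact_of_comp_eq_zero_of_ker_le_range (LinearMap.ext fun y ↦ ?_)
      fun x hx ↦ Ext.covariant_sequence_exact₃ _ S x rfl hx,
    LinearMap.exact_of_comp_eq_zero_of_ker_le_range (LinearMap.ext fun y ↦ ?_)
      fun x hx ↦ Ext.covariant_sequence_exact₁ _ S x hx rfl⟩
  · change (y.comp (Ext.mk₀ (ModuleCat.ofHom g)) (add_zero i)).comp S.extClass rfl = 0
    rw [Ext.comp_assoc_of_second_deg_zero]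
    exact (congrArg (y.comp · rfl) S.comp_extClass).trans (Ext.comp_zero ..)
  · change (y.comp S.extClass rfl).comp (Ext.mk₀ (ModuleCat.ofHom f)) (add_zero _) = 0
    rw [Ext.comp_assoc_of_third_deg_zero]
    exact (congrArg (y.comp · rfl) S.extClass_comp).trans (Ext.comp_zero ..)

lemma exists_exact_precomp_connecting (i : ℕ) :
    ∃ δ : ExtModule R A M i →ₗ[R] ExtModule R C M (i + 1),
      Function.Exact (precomp M f i) δ ∧ Function.Exact δ (precomp M g (i + 1)) := by
  have S := shortExact_of_exact hf hfg hg
  refine ⟨S.extClass.precompOfLinear R (ModuleCat.of R M) (add_comm 1 i),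
    LinearMap.exact_of_comp_eq_zero_of_ker_le_range (LinearMap.ext fun y ↦ ?_)
      fun x hx ↦ Ext.contravariant_sequence_exact₁ S _ x (add_comm 1 i) hx,
    LinearMap.exact_of_comp_eq_zero_of_ker_le_range (LinearMap.ext fun y ↦ ?_)
      fun x hx ↦ Ext.contravariant_sequence_exact₃ S _ x hx (add_comm 1 i)⟩
  · change S.extClass.comp ((Ext.mk₀ (ModuleCat.ofHom f)).comp y (zero_add i)) (add_comm 1 i) = 0
    rw [← Ext.comp_assoc_of_second_deg_zero]
    exact (congrArg (Ext.comp · y (add_comm 1 i)) S.extClass_comp).trans (Ext.zero_comp ..)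
  · change (Ext.mk₀ (ModuleCat.ofHom g)).comp (S.extClass.comp y (add_comm 1 i)) (zero_add _) = 0
    rw [← Ext.comp_assoc _ _ _ (zero_add 1) (add_comm 1 i) (by lia)]
    exact (congrArg (Ext.comp · y (add_comm 1 i)) S.comp_extClass).trans (Ext.zero_comp ..)

end LongExactSequence

end ExtModule

end ExtModule

open ExtModule

section PowerTorsion

variable {R : Type*} [CommRing R] {M M' : Type*} [AddCommGroup M] [Module R M]
  [AddCommGroup M'] [Module R M'] {a b : Ideal R}

/-- `M` is `a`-power torsion, i.e. equal to its submodule `Γ_a(M)`: each element of `M` is killed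
by some power of the ideal `a`. -/
def IsPowerTorsion (a : Ideal R) (M : Type*) [AddCommGroup M] [Module R M] : Prop :=
  ∀ m : M, ∃ n : ℕ, ∀ r ∈ a ^ n, r • m = 0

namespace IsPowerTorsion

lemma of_injective (h : IsPowerTorsion a M') {f : M →ₗ[R] M'} (hf : Function.Injective f) :
    IsPowerTorsion a M := fun m ↦ by
  obtain ⟨n, hn⟩ := h (f m)
  exact ⟨n, fun r hr ↦ hf (by rw [map_smul, hn r hr, map_zero])⟩

lemma of_surjective (h : IsPowerTorsion a M) {f : M →ₗ[R] M'} (hf : Function.Surjective f) :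
    IsPowerTorsion a M' := fun m' ↦ by
  obtain ⟨m, rfl⟩ := hf m'
  obtain ⟨n, hn⟩ := h m
  exact ⟨n, fun r hr ↦ by rw [← map_smul, hn r hr, map_zero]⟩

lemma mono (h : IsPowerTorsion a M) (hba : b ≤ a) : IsPowerTorsion b M := fun m ↦ by
  obtain ⟨n, hn⟩ := h m
  exact ⟨n, fun r hr ↦ hn r (Ideal.pow_right_mono hba n hr)⟩

lemma quotient (a : Ideal R) : IsPowerTorsion a (R ⧸ a) := fun m ↦ by
  obtain ⟨x, rfl⟩ := Submodule.mkQ_surjective a m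
  refine ⟨1, fun r hr ↦ ?_⟩
  rw [← map_smul, Submodule.mkQ_apply, Submodule.Quotient.mk_eq_zero]
  exact a.mul_mem_right _ (pow_one a ▸ hr)

lemma le_of_quotient {p : Ideal R} [p.IsPrime] (h : IsPowerTorsion a (R ⧸ p)) : a ≤ p := by
  obtain ⟨n, hn⟩ := h (Submodule.Quotient.mk 1)
  refine Ideal.IsPrime.le_of_pow_le (n := n) fun r hr ↦ ?_
  have := hn r hr
  rwa [← Submodule.Quotient.mk_smul, Submodule.Quotient.mk_eq_zero, smul_eq_mul, mul_one] at this

end IsPowerTorsion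

end PowerTorsion

section SerreClass

variable {R : Type u} [CommRing R] (P : ObjectProperty (ModuleCat.{u} R)) [P.IsSerreClass]
  {N M X Y Z : Type u} [AddCommGroup N] [Module R N] [AddCommGroup M] [Module R M]
  [AddCommGroup X] [Module R X] [AddCommGroup Y] [Module R Y] [AddCommGroup Z] [Module R Z]

lemma prop_of_subsingleton [Subsingleton X] : P (.of R X) :=
  P.prop_of_isZero (ModuleCat.isZero_of_subsingleton _)

variable {P}

lemma prop_of_injective {f : X →ₗ[R] Y} (hf : Function.Injective f) (hY : P (.of R Y)) :
    P (.of R X) :=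
  have : Mono (ModuleCat.ofHom f) := (ModuleCat.mono_iff_injective _).mpr hf
  P.prop_of_mono (ModuleCat.ofHom f) hY

lemma prop_of_surjective {f : X →ₗ[R] Y} (hf : Function.Surjective f) (hX : P (.of R X)) :
    P (.of R Y) :=
  have : Epi (ModuleCat.ofHom f) := (ModuleCat.epi_iff_surjective _).mpr hf
  P.prop_of_epi (ModuleCat.ofHom f) hX

lemma prop_of_linearEquiv (e : X ≃ₗ[R] Y) (hX : P (.of R X)) : P (.of R Y) :=
  prop_of_surjective (f := e.toLinearMap) e.surjective hX

lemma prop_of_exact {f : X →ₗ[R] Y} {g : Y →ₗ[R] Z} (h : Function.Exact f g)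
    (hX : P (.of R X)) (hZ : P (.of R Z)) : P (.of R Y) :=
  P.prop_X₂_of_exact (S := ModuleCat.shortComplexOfCompEqZero f g h.linearMap_comp_eq_zero)
    ((ShortComplex.ShortExact.moduleCat_exact_iff_function_exact _).mpr h) hX hZ

lemma prop_of_prop_ker (f : X →ₗ[R] Y) (hf : P (.of R (LinearMap.ker f))) (hY : P (.of R Y)) :
    P (.of R X) :=
  prop_of_exact (LinearMap.exact_subtype_ker_map f) hf hY

lemma prop_ker_of_exact {f : X →ₗ[R] Y} {g : Y →ₗ[R] Z} (h : Function.Exact f g)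
    (hX : P (.of R X)) : P (.of R (LinearMap.ker g)) := by
  rw [h.linearMap_ker_eq]
  exact prop_of_surjective f.surjective_rangeRestrict hX

lemma prop_ker_comp {f : X →ₗ[R] Y} {g : Y →ₗ[R] Z} (hf : P (.of R (LinearMap.ker f)))
    (hg : P (.of R (LinearMap.ker g))) : P (.of R (LinearMap.ker (g ∘ₗ f))) := by
  let f' : LinearMap.ker (g ∘ₗ f) →ₗ[R] LinearMap.ker g := f.restrict fun _ hx ↦ hx
  let ι : LinearMap.ker f' →ₗ[R] LinearMap.ker f :=
    ((LinearMap.ker (g ∘ₗ f)).subtype.domRestrict (LinearMap.ker f')).codRestrict _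
      fun x ↦ congrArg Subtype.val x.2
  have hι : Function.Injective ι := fun x y hxy ↦
    Subtype.ext (Subtype.ext (congrArg (LinearMap.ker f).subtype hxy))
  exact prop_of_prop_ker f' (prop_of_injective hι hf) hg

lemma prop_pi (hX : P (.of R X)) (n : ℕ) : P (.of R (Fin n → X)) := by
  induction n with
  | zero => exact prop_of_subsingleton P
  | succ n ih =>
    have e : (X × (Fin n → X)) ≃ₗ[R] (Fin (n + 1) → X) := Fin.consLinearEquiv R fun _ ↦ X
    exact prop_of_linearEquiv e (prop_of_exact .inl_snd hX ih)

variable {f : X →ₗ[R] Y} {g : Y →ₗ[R] Z} (hf : Function.Injective f) (hfg : Function.Exact f g)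
  (hg : Function.Surjective g)
include hf hfg hg

lemma prop_ker_postcomp {i : ℕ} (h : ∀ j, j + 1 = i → P (.of R (ExtModule R N Z j))) :
    P (.of R (LinearMap.ker (postcomp N f i))) := by
  cases i with
  | zero =>
    rw [LinearMap.ker_eq_bot.2 (postcomp_zero_injective hf)]
    exact prop_of_subsingleton P
  | succ j =>
    obtain ⟨δ, -, hδ⟩ := exists_exact_postcomp_connecting (N := N) hf hfg hg j
    exact prop_ker_of_exact hδ (h j rfl)

lemma prop_ker_precomp {i : ℕ} (h : ∀ j, j + 1 = i → P (.of R (ExtModule R X M j))) :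
    P (.of R (LinearMap.ker (precomp M g i))) := by
  cases i with
  | zero =>
    rw [LinearMap.ker_eq_bot.2 (precomp_zero_injective hg)]
    exact prop_of_subsingleton P
  | succ j =>
    obtain ⟨δ, -, hδ⟩ := exists_exact_precomp_connecting (M := M) hf hfg hg j
    exact prop_ker_of_exact hδ (h j rfl)

lemma prop_ext_mid {i : ℕ} (h₁ : P (.of R (ExtModule R N X i)))
    (h₃ : P (.of R (ExtModule R N Z i))) : P (.of R (ExtModule R N Y i)) :=
  prop_of_exact (exact_postcomp hf hfg hg i) h₁ h₃

lemma prop_ext_right {i : ℕ} (h₂ : P (.of R (ExtModule R N Y i)))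
    (h₁ : P (.of R (ExtModule R N X (i + 1)))) : P (.of R (ExtModule R N Z i)) := by
  obtain ⟨δ, hδ, -⟩ := exists_exact_postcomp_connecting (N := N) hf hfg hg i
  exact prop_of_exact hδ h₂ h₁

lemma prop_ext_left {i : ℕ} (h₃ : P (.of R (ExtModule R N Z i)))
    (h₂ : P (.of R (ExtModule R N Y (i + 1)))) : P (.of R (ExtModule R N X (i + 1))) :=
  prop_of_prop_ker _ (prop_ker_postcomp hf hfg hg fun _ hj ↦ Nat.succ_injective hj ▸ h₃) h₂

end SerreClass

section SerreClassExt

variable {R : Type u} [CommRing R] {P : ObjectProperty (ModuleCat.{u} R)} [P.IsSerreClass]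
  {N M : Type u} [AddCommGroup N] [Module R N] [AddCommGroup M] [Module R M]

lemma prop_ext_zero_of_injective {M' : Type u} [AddCommGroup M'] [Module R M'] {f : M →ₗ[R] M'}
    (hf : Function.Injective f) (h : P (.of R (ExtModule R N M' 0))) :
    P (.of R (ExtModule R N M 0)) :=
  prop_of_injective (postcomp_zero_injective hf) h

lemma prop_ext_of_submodule_of_quotient (K : Submodule R M) {i : ℕ}
    (hK : P (.of R (ExtModule R N K i))) (hMK : P (.of R (ExtModule R N (M ⧸ K) i))) :
    P (.of R (ExtModule R N M i)) :=
  prop_ext_mid K.subtype_injective (LinearMap.exact_subtype_mkQ K) K.mkQ_surjective hK hMK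

lemma prop_ext_quotient (K : Submodule R M) {i : ℕ} (hM : P (.of R (ExtModule R N M i)))
    (hK : P (.of R (ExtModule R N K (i + 1)))) : P (.of R (ExtModule R N (M ⧸ K) i)) :=
  prop_ext_right K.subtype_injective (LinearMap.exact_subtype_mkQ K) K.mkQ_surjective hM hK

lemma prop_ext [IsNoetherianRing R] [Module.Finite R N] (hM : P (.of R M)) (i : ℕ) :
    P (.of R (ExtModule R N M i)) := by
  induction i generalizing N with
  | zero =>
    obtain ⟨n, f, hf⟩ := Module.Finite.exists_fin' R N
    have e : (Fin n → M) ≃ₗ[R] ExtModule R (Fin n → R) M 0 :=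
      (Module.piEquiv (Fin n) R M).trans (zeroEquiv R (Fin n → R) M).symm
    exact prop_of_injective (precomp_zero_injective hf) (prop_of_linearEquiv e (prop_pi hM n))
  | succ i ih =>
    obtain ⟨n, f, hf⟩ := Module.Finite.exists_fin' R N
    have := subsingleton_succ_of_projective (R := R) (N := Fin n → R) (M := M) i
    exact prop_of_prop_ker (precomp M f (i + 1))
      (prop_ker_precomp (LinearMap.ker f).subtype_injective (LinearMap.exact_subtype_ker_map f) hf
        fun _ _ ↦ Nat.succ_injective ‹_› ▸ ih)
      (prop_of_subsingleton P)

lemma prop_ext_of_prop_ext_quotient [IsNoetherianRing R] {a : Ideal R} {d : ℕ}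
    (h : ∀ i ≤ d, P (.of R (ExtModule R (R ⧸ a) M i))) [hN : Module.Finite R N]
    (haN : IsPowerTorsion a N) {i : ℕ} (hi : i ≤ d) : P (.of R (ExtModule R N M i)) := by
  induction i using Nat.strong_induction_on generalizing N with
  | _ i ih =>
    induction hN using IsNoetherianRing.induction_on_isQuotientEquivQuotientPrime R with
    | subsingleton N =>
      have := subsingleton_of_left (R := R) (N := N) (M := M) i
      exact prop_of_subsingleton P
    | quotient N p e =>
      have hap : a ≤ p.asIdeal :=
        (haN.of_surjective (f := e.toLinearMap) e.surjective).le_of_quotient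
      let g : (R ⧸ a) →ₗ[R] N := e.symm.toLinearMap ∘ₗ Submodule.factor hap
      have hg : Function.Surjective g := e.symm.surjective.comp (Submodule.factor_surjective hap)
      refine prop_of_prop_ker (precomp M g i) (prop_ker_precomp (LinearMap.ker g).subtype_injective
        (LinearMap.exact_subtype_ker_map g) hg fun j hj ↦ ?_) (h i hi)
      exact ih j (by lia) ((IsPowerTorsion.quotient a).of_injective
        (LinearMap.ker g).subtype_injective) (by lia)
    | exact N₁ N₂ N₃ f g hf hg hfg h₁ h₃ =>
      exact prop_of_exact (exact_precomp hf hfg hg i) (h₃ (haN.of_surjective hg))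
        (h₁ (haN.of_injective hf))

lemma lsmul_quotient_range_eq_zero (y : R)
    (m : M ⧸ LinearMap.range (LinearMap.lsmul R M y)) : y • m = 0 := by
  obtain ⟨m, rfl⟩ := Submodule.mkQ_surjective _ m
  rw [← map_smul]
  exact (Submodule.Quotient.mk_eq_zero _).2 ⟨m, rfl⟩

lemma exact_torsionBy_subtype_rangeRestrict (y : R) :
    Function.Exact (Submodule.torsionBy R M y).subtype (LinearMap.lsmul R M y).rangeRestrict := by
  rw [LinearMap.exact_iff, LinearMap.ker_rangeRestrict, Submodule.range_subtype]
  rfl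

lemma prop_ext_of_smul_left_eq_zero {y : R} (hy : ∀ n : N, y • n = 0) {i : ℕ}
    (h₀ : P (.of R (ExtModule R N (Submodule.torsionBy R M y) i)))
    (h₁ : ∀ j, j + 1 = i →
      P (.of R (ExtModule R N (M ⧸ LinearMap.range (LinearMap.lsmul R M y)) j))) :
    P (.of R (ExtModule R N M i)) := by
  let μ := LinearMap.lsmul R M y
  have hμ : postcomp N μ i = 0 := by
    rw [postcomp_lsmul]
    exact LinearMap.ext fun x ↦ smul_eq_zero_of_left hy x
  have hker : P (.of R (LinearMap.ker (postcomp N μ i))) := by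
    change P (.of R (LinearMap.ker (postcomp N (μ.range.subtype ∘ₗ μ.rangeRestrict) i)))
    rw [postcomp_comp]
    exact prop_ker_comp
      (prop_ker_of_exact (exact_postcomp (Submodule.subtype_injective _)
        (exact_torsionBy_subtype_rangeRestrict y) μ.surjective_rangeRestrict i) h₀)
      (prop_ker_postcomp μ.range.subtype_injective (LinearMap.exact_subtype_mkQ _)
        μ.range.mkQ_surjective h₁)
  rw [hμ, LinearMap.ker_zero] at hker
  exact prop_of_linearEquiv Submodule.topEquiv hker

lemma prop_torsionBy_ext [IsNoetherianRing R] {a : Ideal R} {y : R}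
    (h : ∀ (j : ℕ) (N' : Type u) [AddCommGroup N'] [Module R N'] [Module.Finite R N'],
      IsPowerTorsion a N' → (∀ n : N', y • n = 0) → P (.of R (ExtModule R N' M j)))
    [Module.Finite R N] (hN : IsPowerTorsion a N) (i : ℕ) :
    P (.of R (Submodule.torsionBy R (ExtModule R N M i) y)) := by
  let μ := LinearMap.lsmul R N y
  change P (.of R (LinearMap.ker (LinearMap.lsmul R (ExtModule R N M i) y)))
  rw [← precomp_lsmul]
  change P (.of R (LinearMap.ker (precomp M (μ.range.subtype ∘ₗ μ.rangeRestrict) i)))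
  rw [precomp_comp]
  refine prop_ker_comp
    (prop_ker_of_exact (exact_precomp μ.range.subtype_injective (LinearMap.exact_subtype_mkQ _)
      μ.range.mkQ_surjective i)
      (h i _ (hN.of_surjective μ.range.mkQ_surjective) (lsmul_quotient_range_eq_zero y)))
    (prop_ker_precomp (Submodule.subtype_injective _)
      (exact_torsionBy_subtype_rangeRestrict y) μ.surjective_rangeRestrict fun j _ ↦ ?_)
  exact h j _ (hN.of_injective (Submodule.subtype_injective _)) fun n ↦ Submodule.smul_torsionBy y n

variable (R M) in
/-- The identification of `Hom_R(R/a, M)` with the submodule `0 :_M a`, by evaluation at `1`. -/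
noncomputable def homQuotientEquivTorsionBySet (a : Ideal R) :
    ((R ⧸ a) →ₗ[R] M) ≃ₗ[R] Submodule.torsionBySet R M (a : Set R) where
  toFun f := ⟨f (Submodule.Quotient.mk 1), (Submodule.mem_torsionBySet_iff _ _).2 fun r ↦ by
    rw [← map_smul, ← Submodule.Quotient.mk_smul, (Submodule.Quotient.mk_eq_zero a).2, map_zero]
    simp⟩
  map_add' _ _ := rfl
  map_smul' _ _ := rfl
  invFun m := a.liftQ (LinearMap.toSpanSingleton R M m)
    fun r hr ↦ (Submodule.mem_torsionBySet_iff _ _).1 m.2 ⟨r, hr⟩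
  left_inv f := Submodule.linearMap_qext _ <| LinearMap.ext_ring <| by simp
  right_inv m := Subtype.ext <| (a.liftQ_apply _ 1).trans (one_smul R _)

lemma prop_ext_zero_quotient_iff (a : Ideal R) :
    P (.of R (ExtModule R (R ⧸ a) M 0)) ↔ P (.of R (Submodule.torsionBySet R M (a : Set R))) :=
  let e := (zeroEquiv R (R ⧸ a) M).trans (homQuotientEquivTorsionBySet R M a)
  ⟨prop_of_linearEquiv e, prop_of_linearEquiv e.symm⟩

instance isSerreClass_isFG [IsNoetherianRing R] : (ModuleCat.isFG.{u} R).IsSerreClass where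
  exists_zero := ⟨.of R PUnit, ModuleCat.isZero_of_subsingleton _,
    inferInstanceAs (Module.Finite R PUnit.{u + 1})⟩
  prop_of_mono f hf hN := by
    rw [ModuleCat.isFG_iff] at *
    exact Module.Finite.of_injective f.hom ((ModuleCat.mono_iff_injective f).1 hf)
  prop_of_epi f hf hM := by
    rw [ModuleCat.isFG_iff] at *
    exact Module.Finite.of_surjective f.hom ((ModuleCat.epi_iff_surjective f).1 hf)
  prop_X₂_of_shortExact {S} hS h₁ h₃ := by
    rw [ModuleCat.isFG_iff] at *
    exact Module.Finite.of_exact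
      ((ShortComplex.ShortExact.moduleCat_exact_iff_function_exact _).1 hS.exact)
      ((ModuleCat.epi_iff_surjective _).1 hS.epi_g)

end SerreClassExt

section Artinian

lemma exists_forall_ge_eq_of_antitone {α : Type*} [PartialOrder α] [WellFoundedLT α]
    {F : ℕ → ℕ → α} (hF : ∀ i, Antitone (F i)) (hF' : Antitone F) : ∃ k, ∀ i ≥ k, F i = F k := by
  obtain ⟨N, hN⟩ := WellFoundedLT.antitone_chain_condition (f := fun i ↦ F i i)
    fun i j h ↦ (hF' h j).trans (hF i h)
  have hcol (n : ℕ) : ∃ k, ∀ i ≥ k, F k n = F i n :=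
    WellFoundedLT.antitone_chain_condition fun _ _ h ↦ hF' h n
  choose k hk using hcol
  let K := N ⊔ (Finset.range N).sup k
  refine ⟨K, fun i hi ↦ le_antisymm (hF' hi) fun n ↦ ?_⟩
  rcases lt_or_ge n N with hn | hn
  · have hnK : k n ≤ K := (Finset.le_sup (Finset.mem_range.2 hn)).trans le_sup_right
    rw [← hk n K hnK, hk n i (hnK.trans hi)]
  · calc F K n ≤ F N N := (hF' le_sup_left n).trans (hF N hn)
      _ = F (i ⊔ n) (i ⊔ n) := hN _ (hn.trans le_sup_right)
      _ ≤ F i n := (hF' le_sup_left _).trans (hF i le_sup_right)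

variable {R : Type*} [CommRing R] {M : Type*} [AddCommGroup M] [Module R M]

/-- The submodule of `0 :_M x` formed by the `x ^ n`-multiples of elements of `V`. As `n` varies,
these submodules record an `x`-power torsion module `V` inside `0 :_M x`. -/
def torsionLayer (x : R) (V : Submodule R M) (n : ℕ) : Submodule R (Submodule.torsionBy R M x) :=
  (V.map (LinearMap.lsmul R M (x ^ n))).comap (Submodule.torsionBy R M x).subtype

lemma torsionLayer_mono (x : R) : Monotone (torsionLayer (M := M) x) :=
  fun _ _ h _ ↦ Submodule.comap_mono (Submodule.map_mono h)

lemma torsionLayer_antitone (x : R) (V : Submodule R M) : Antitone (torsionLayer x V) := by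
  refine antitone_nat_of_succ_le fun n ↦ Submodule.comap_mono ?_
  rintro _ ⟨v, hv, rfl⟩
  exact ⟨x • v, V.smul_mem x hv, by simp [smul_smul, pow_succ']⟩

lemma le_of_torsionLayer_le {x : R} (hx : ∀ m : M, ∃ n : ℕ, x ^ n • m = 0) {U V : Submodule R M}
    (hUV : U ≤ V) (h : torsionLayer x V ≤ torsionLayer x U) : V ≤ U := by
  have key (n : ℕ) : ∀ v ∈ V, x ^ n • v = 0 → v ∈ U := by
    induction n with
    | zero => simp +contextual
    | succ n ih =>
      intro v hv hxv
      have hxv' : x ^ n • v ∈ Submodule.torsionBy R M x := by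
        rwa [Submodule.mem_torsionBy_iff, smul_smul, ← pow_succ']
      obtain ⟨u, hu, hxu⟩ := h n (show ⟨x ^ n • v, hxv'⟩ ∈ torsionLayer x V n from ⟨v, hv, rfl⟩)
      have hxu : x ^ n • u = x ^ n • v := hxu
      have hvu : v - u ∈ U := ih _ (V.sub_mem hv (hUV hu)) (by rw [smul_sub, hxu, sub_self])
      exact (sub_add_cancel v u) ▸ U.add_mem hvu hu
  intro v hv
  obtain ⟨n, hn⟩ := hx v
  exact key n v hv hn

lemma isArtinian_of_isArtinian_torsionBy {x : R} (hx : ∀ m : M, ∃ n : ℕ, x ^ n • m = 0)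
    [IsArtinian R (Submodule.torsionBy R M x)] : IsArtinian R M := by
  rw [← monotone_stabilizes_iff_artinian]
  intro V
  have hV : Antitone fun i ↦ OrderDual.ofDual (V i) := V.monotone
  obtain ⟨k, hk⟩ := exists_forall_ge_eq_of_antitone
    (fun i ↦ torsionLayer_antitone x (OrderDual.ofDual (V i)))
    ((torsionLayer_mono x).comp_antitone hV)
  exact ⟨k, fun i hi ↦ le_antisymm (V.monotone hi) (le_of_torsionLayer_le hx (hV hi) (hk i hi).ge)⟩

lemma isArtinian_of_isArtinian_torsionBySet_finset (s : Finset R)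
    (hs : ∀ x ∈ s, ∀ m : M, ∃ n : ℕ, x ^ n • m = 0)
    (h : IsArtinian R (Submodule.torsionBySet R M (s : Set R))) : IsArtinian R M := by
  classical
  induction s using Finset.induction_on generalizing M with
  | empty =>
    have htop : Submodule.torsionBySet R M ((∅ : Finset R) : Set R) = ⊤ := by
      ext m
      simp [Submodule.mem_torsionBySet_iff]
    rw [htop] at h
    exact isArtinian_of_linearEquiv Submodule.topEquiv
  | insert x s hx ih =>
    let K := Submodule.torsionBy R M x
    have : IsArtinian R (Submodule.torsionBySet R K (s : Set R)) := by
      let ι : Submodule.torsionBySet R K (s : Set R) →ₗ[R]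
          Submodule.torsionBySet R M (insert x s : Finset R) :=
        (K.subtype ∘ₗ Submodule.subtype _).codRestrict _ fun m ↦ by
          rw [Submodule.mem_torsionBySet_iff]
          rintro ⟨y, hy⟩
          rcases Finset.mem_insert.1 hy with rfl | hy
          · exact m.1.2
          · exact congrArg K.subtype ((Submodule.mem_torsionBySet_iff _ _).1 m.2 ⟨y, hy⟩)
      exact isArtinian_of_injective ι <|
        Set.injective_codRestrict _ |>.2 <|
          K.subtype_injective.comp (Submodule.subtype_injective _)
    have : IsArtinian R K := ih (fun y hy m ↦ by
      obtain ⟨n, hn⟩ := hs y (Finset.mem_insert_of_mem hy) m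
      exact ⟨n, Subtype.ext hn⟩) this
    exact isArtinian_of_isArtinian_torsionBy (hs x (Finset.mem_insert_self x s))

/-- Melkersson's criterion. -/
theorem isArtinian_of_isArtinian_torsionBySet {a : Ideal R} (ha : a.FG) (hM : IsPowerTorsion a M)
    [h : IsArtinian R (Submodule.torsionBySet R M (a : Set R))] : IsArtinian R M := by
  obtain ⟨s, rfl⟩ := ha
  refine isArtinian_of_isArtinian_torsionBySet_finset s (fun x hx m ↦ ?_) ?_
  · obtain ⟨n, hn⟩ := hM m
    exact ⟨n, hn _ (Ideal.pow_mem_pow (Ideal.subset_span hx) n)⟩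
  · rwa [Submodule.torsionBySet_eq_torsionBySet_span]

lemma exists_pow_smul_eq_pow_succ_smul [IsArtinian R M] (x : R) :
    ∃ n : ℕ, ∀ m : M, ∃ m' : M, x ^ n • m = x ^ (n + 1) • m' := by
  obtain ⟨n, hn⟩ := IsArtinian.range_smul_pow_stabilizes M x
  refine ⟨n, fun m ↦ ?_⟩
  obtain ⟨m', hm'⟩ := (hn (n + 1) n.le_succ).le (LinearMap.mem_range_self _ m)
  exact ⟨m', hm'.symm⟩

lemma le_asIdeal_of_mem_support_torsionBySet {a : Ideal R} {q : PrimeSpectrum R}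
    (hq : q ∈ Module.support R (Submodule.torsionBySet R M (a : Set R))) : a ≤ q.asIdeal :=
  fun r hr ↦ Module.annihilator_le_of_mem_support hq <| Module.mem_annihilator.2 fun u ↦
    Subtype.ext ((Submodule.mem_torsionBySet_iff _ _).1 u.2 ⟨r, hr⟩)

lemma isArtinian_of_support_isMaximal [IsNoetherianRing R] [hM : Module.Finite R M]
    (h : ∀ p ∈ Module.support R M, p.asIdeal.IsMaximal) : IsArtinian R M := by
  induction hM using IsNoetherianRing.induction_on_isQuotientEquivQuotientPrime R with
  | subsingleton N => infer_instance
  | quotient N p e =>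
    have hp : p.asIdeal.IsMaximal := h p <| by
      rw [e.support_eq, Module.support_eq_zeroLocus, Ideal.annihilator_quotient]
      exact le_refl (p.asIdeal : Set R)
    have : IsSimpleModule R (R ⧸ p.asIdeal) := isSimpleModule_iff_isCoatom.2 hp.out
    exact isArtinian_of_linearEquiv e.symm
  | exact N₁ N₂ N₃ f g hf hg hfg h₁ h₃ =>
    have := h₁ fun p hp ↦ h p (Module.support_subset_of_injective f hf hp)
    have := h₃ fun p hp ↦ h p (Module.support_subset_of_surjective g hg hp)
    exact isArtinian_of_range_eq_ker f g hfg.linearMap_ker_eq.symm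

end Artinian

section NoetherianInduction

variable {R : Type u} [CommRing R] {P : ObjectProperty (ModuleCat.{u} R)} [P.IsSerreClass]
  {M N : Type u} [AddCommGroup M] [Module R M] [AddCommGroup N] [Module R N] {a : Ideal R}

lemma annihilator_lt_annihilator_torsionBy {y : R} (hy : y ∉ Module.annihilator R M)
    {f : N →ₗ[R] M} (hf : Function.Injective f) :
    Module.annihilator R M < Module.annihilator R (Submodule.torsionBy R N y) := by
  refine SetLike.lt_iff_le_and_exists.2 ⟨?_, y, ?_, hy⟩
  · exact (f.annihilator_le_of_injective hf).trans
      (LinearMap.annihilator_le_of_injective _ (Submodule.subtype_injective _))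
  · exact Module.mem_annihilator.2 (Submodule.smul_torsionBy y)

lemma annihilator_lt_annihilator_quotient {y : R} (hy : y ∉ Module.annihilator R M) :
    Module.annihilator R M <
      Module.annihilator R (M ⧸ LinearMap.range (LinearMap.lsmul R M y)) := by
  refine SetLike.lt_iff_le_and_exists.2 ⟨?_, y, ?_, hy⟩
  · exact LinearMap.annihilator_le_of_surjective _ (Submodule.mkQ_surjective _)
  · exact Module.mem_annihilator.2 (lsmul_quotient_range_eq_zero y)

lemma smul_quotient_eq_zero {y : R} (hy : y ∈ a) (r : R ⧸ a) : y • r = 0 := by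
  obtain ⟨r, rfl⟩ := Submodule.mkQ_surjective a r
  rw [← map_smul, Submodule.mkQ_apply, Submodule.Quotient.mk_eq_zero]
  exact a.mul_mem_right r hy

lemma prop_of_pow_le_annihilator [IsNoetherianRing R] {n : ℕ}
    (hn : a ^ n ≤ Module.annihilator R M) (h : P (.of R (ExtModule R (R ⧸ a) M 0))) :
    P (.of R M) := by
  have htor : Submodule.torsionBySet R M ((a ^ n : Ideal R) : Set R) = ⊤ :=
    eq_top_iff.2 fun m _ ↦ (Submodule.mem_torsionBySet_iff _ _).2 fun r ↦
      Module.mem_annihilator.1 (hn r.2) m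
  have hpow : P (.of R (ExtModule R (R ⧸ a ^ n) M 0)) :=
    prop_ext_of_prop_ext_quotient (d := 0) (fun i hi ↦ Nat.le_zero.1 hi ▸ h)
      (fun m ↦ ⟨n, fun r hr ↦ smul_quotient_eq_zero hr m⟩) le_rfl
  have htop := (prop_ext_zero_quotient_iff _).1 hpow
  rw [htor] at htop
  exact prop_of_linearEquiv Submodule.topEquiv htop

lemma prop_ext_of_smul_surjective [IsNoetherianRing R] {y : R} (hya : y ∈ a)
    (hy : ∀ m : M, ∃ m' : M, y • m' = m) {i : ℕ}
    (h : P (.of R (ExtModule R (R ⧸ a) (Submodule.torsionBy R M y) i))) :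
    P (.of R (ExtModule R (R ⧸ a) M i)) := by
  refine prop_ext_of_smul_left_eq_zero (smul_quotient_eq_zero hya) h fun j _ ↦ ?_
  have : Subsingleton (M ⧸ LinearMap.range (LinearMap.lsmul R M y)) := by
    rw [Submodule.Quotient.subsingleton_iff]
    exact LinearMap.range_eq_top.2 hy
  exact prop_ext (prop_of_subsingleton P) j

theorem prop_ext_of_isArtinian [IsNoetherianRing R] (a : Ideal R) [hM : IsArtinian R M]
    (h : P (.of R (ExtModule R (R ⧸ a) M 0))) (i : ℕ) : P (.of R (ExtModule R (R ⧸ a) M i)) := by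
  induction hI : Module.annihilator R M using WellFoundedGT.induction generalizing M i with
  | _ I ih =>
  subst hI
  by_cases ha : a ≤ (Module.annihilator R M).radical
  · obtain ⟨n, hn⟩ := Ideal.exists_pow_le_of_le_radical_of_fg ha (IsNoetherian.noetherian a)
    exact prop_ext (prop_of_pow_le_annihilator hn h) i
  obtain ⟨x, hxa, hx⟩ := SetLike.not_le_iff_exists.1 ha
  obtain ⟨n, hn⟩ := exists_pow_smul_eq_pow_succ_smul (M := M) x
  have hxn (k : ℕ) : x ^ k ∉ Module.annihilator R M := fun hk ↦ hx ⟨k, hk⟩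
  let D := LinearMap.range (LinearMap.lsmul R M (x ^ n))
  have hxD : ∀ d : D, ∃ d' : D, x • d' = d := by
    rintro ⟨_, m, rfl⟩
    obtain ⟨m', hm'⟩ := hn m
    exact ⟨⟨x ^ n • m', m', rfl⟩, Subtype.ext (by simp [hm', pow_succ', mul_smul])⟩
  have hDx (j : ℕ) : P (.of R (ExtModule R (R ⧸ a) (Submodule.torsionBy R D x) j)) :=
    ih _ (annihilator_lt_annihilator_torsionBy (pow_one x ▸ hxn 1) D.subtype_injective)
      (prop_ext_zero_of_injective (f := D.subtype ∘ₗ Submodule.subtype _)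
        (D.subtype_injective.comp (Submodule.subtype_injective _)) h) j rfl
  have hD : P (.of R (ExtModule R (R ⧸ a) D 1)) := prop_ext_of_smul_surjective hxa hxD (hDx 1)
  have hMD : P (.of R (ExtModule R (R ⧸ a) (M ⧸ D) i)) :=
    ih _ (annihilator_lt_annihilator_quotient (hxn n)) (prop_ext_quotient D h hD) i rfl
  exact prop_ext_of_submodule_of_quotient D
    (prop_ext_of_smul_surjective hxa hxD (hDx i)) hMD

end NoetherianInduction

section Submonoid

variable {R : Type u} [CommRing R] {S : Submonoid R} {M : Type*} [AddCommGroup M] [Module R M]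

lemma exists_mem_forall_notMem {a : Ideal R} {T : Set (Ideal R)} (hT : T.Finite)
    (h : ∀ p ∈ T, p.IsPrime ∧ ¬ a ≤ p) : ∃ x ∈ a, ∀ p ∈ T, x ∉ p := by
  by_contra! hcon
  have hsub : (a : Set R) ⊆ ⋃ p ∈ T, p := fun x hx ↦
    let ⟨p, hp, hxp⟩ := hcon x hx
    Set.mem_biUnion hp hxp
  obtain ⟨p, hp, hap⟩ :=
    (Ideal.subset_union_prime_finite hT (f := id) ⊥ ⊥ fun p hp _ _ ↦ (h p hp).1).1 hsub
  exact (h p hp).2 hap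

lemma exists_mem_annihilator_of_forall_exists_smul_eq_zero {N : Submodule R M} (hN : N.FG)
    (h : ∀ x ∈ N, ∃ s ∈ S, s • x = 0) : ∃ s ∈ S, s ∈ N.annihilator := by
  induction N, hN using Submodule.fg_induction with
  | singleton x =>
    obtain ⟨s, hs, hsx⟩ := h x (Submodule.mem_span_singleton_self x)
    exact ⟨s, hs, (Submodule.mem_annihilator_span_singleton x s).2 hsx⟩
  | sup N₁ N₂ _ _ ih₁ ih₂ =>
    obtain ⟨s, hs, hs₁⟩ := ih₁ fun x hx ↦ h x (le_sup_left (a := N₁) hx)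
    obtain ⟨t, ht, ht₂⟩ := ih₂ fun x hx ↦ h x (le_sup_right (a := N₁) hx)
    refine ⟨s * t, S.mul_mem hs ht, Submodule.mem_annihilator.2 fun x hx ↦ ?_⟩
    obtain ⟨x₁, hx₁, x₂, hx₂, rfl⟩ := Submodule.mem_sup.1 hx
    rw [smul_add, mul_smul, mul_smul, Submodule.mem_annihilator.1 ht₂ x₂ hx₂, smul_zero, add_zero,
      smul_comm, Submodule.mem_annihilator.1 hs₁ x₁ hx₁, smul_zero]

lemma exists_mem_forall_smul_smul_eq_zero {a : Ideal R} (ha : a.FG) {m : M}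
    (h : ∀ r ∈ a, ∃ s ∈ S, s • r • m = 0) : ∃ s ∈ S, ∀ r ∈ a, s • r • m = 0 := by
  obtain ⟨s, hs, hs'⟩ := exists_mem_annihilator_of_forall_exists_smul_eq_zero (S := S)
    (Submodule.FG.map (LinearMap.toSpanSingleton R M m) ha) (by rintro _ ⟨r, hr, rfl⟩; exact h r hr)
  exact ⟨s, hs, fun r hr ↦ Submodule.mem_annihilator.1 hs' _ ⟨r, hr, rfl⟩⟩

end Submonoid

section Localization

variable {R : Type u} [CommRing R] (S : Submonoid R) {A : Type*} [CommRing A] [Algebra R A]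
  {M M' : Type*} [AddCommGroup M] [Module R M] [AddCommGroup M'] [Module R M']
  [Module A M'] [IsScalarTower R A M'] (f : M →ₗ[R] M') [IsLocalizedModule S f] {a : Ideal R}

lemma isMaximal_of_map_le_of_forall_mem_minimalPrimes [IsLocalization S A]
    (hS : ∀ q : Ideal R, q.IsPrime → a ≤ q → Disjoint (S : Set R) q → q ∈ a.minimalPrimes)
    {q : Ideal A} (hq : q.IsPrime) (haq : a.map (algebraMap R A) ≤ q) : q.IsMaximal := by
  have hmin (p : Ideal A) (hp : p.IsPrime) (hqp : q ≤ p) :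
      p.comap (algebraMap R A) ∈ a.minimalPrimes :=
    hS _ inferInstance (Ideal.map_le_iff_le_comap.1 (haq.trans hqp))
      ((IsLocalization.isPrime_iff_isPrime_disjoint S A p).1 hp).2
  obtain ⟨m, hm, hqm⟩ := Ideal.exists_le_maximal q hq.ne_top
  have hqm' : q.comap (algebraMap R A) = m.comap (algebraMap R A) :=
    (Ideal.comap_mono hqm).antisymm
      ((hmin m hm.isPrime hqm).2 (hmin q hq le_rfl).1 (Ideal.comap_mono hqm))
  rwa [(IsLocalization.orderEmbedding S A).injective hqm']

include S f

lemma IsPowerTorsion.map_algebraMap (h : IsPowerTorsion a M) :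
    IsPowerTorsion (a.map (algebraMap R A)) M' := by
  intro u
  obtain ⟨⟨m, t⟩, hu⟩ := IsLocalizedModule.mk'_surjective S f u
  obtain ⟨n, hn⟩ := h m
  refine ⟨n, fun r hr ↦ ?_⟩
  have hle : (a.map (algebraMap R A)) ^ n ≤
      LinearMap.ker (LinearMap.toSpanSingleton A M' u) := by
    rw [← Ideal.map_pow, Ideal.map_le_iff_le_comap]
    intro r hr
    rw [Ideal.mem_comap, LinearMap.mem_ker, LinearMap.toSpanSingleton_apply, algebraMap_smul,
      ← hu, Function.uncurry_apply_pair, ← IsLocalizedModule.mk'_smul, hn r hr,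
      IsLocalizedModule.mk'_zero]
  exact hle hr

variable [IsLocalization S A]

lemma torsionBySet_map_le_localized' (ha : a.FG) {F : Submodule R M}
    (hF : ∀ m ∈ Submodule.torsionBySet R M (a : Set R), ∃ s ∈ S, s • m ∈ F) :
    Submodule.torsionBySet A M' (a.map (algebraMap R A) : Set A) ≤ F.localized' A S f := by
  intro u hu
  obtain ⟨⟨m, t⟩, rfl⟩ := IsLocalizedModule.mk'_surjective S f u
  rw [Function.uncurry_apply_pair] at hu ⊢
  have hm (r : R) (hr : r ∈ a) : ∃ s ∈ S, s • r • m = 0 := by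
    have h := (Submodule.mem_torsionBySet_iff _ _).1 hu
      ⟨_, Ideal.mem_map_of_mem (algebraMap R A) hr⟩
    obtain ⟨s, hs⟩ := (IsLocalizedModule.mk'_eq_zero' f t (m := r • m)).1 (by
      rw [IsLocalizedModule.mk'_smul, ← algebraMap_smul A r]
      exact h)
    exact ⟨s, s.2, hs⟩
  obtain ⟨s, hs, hsm⟩ := exists_mem_forall_smul_smul_eq_zero ha hm
  obtain ⟨s', hs', hF'⟩ := hF (s • m) ((Submodule.mem_torsionBySet_iff _ _).2
    fun r ↦ (smul_comm _ _ _).trans (hsm r r.2))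
  let c : S := ⟨s' * s, S.mul_mem hs' hs⟩
  have hc : c • m ∈ F := by
    rw [Submonoid.smul_def, mul_smul]
    exact hF'
  exact ⟨c • m, hc, c * t, IsLocalizedModule.mk'_cancel_left f m c t⟩

lemma finite_torsionBySet_map [IsNoetherianRing R] {F : Submodule R M} (hFG : F.FG)
    (hF : ∀ m ∈ Submodule.torsionBySet R M (a : Set R), ∃ s ∈ S, s • m ∈ F) :
    Module.Finite A (Submodule.torsionBySet A M' (a.map (algebraMap R A) : Set A)) := by
  have : IsNoetherianRing A := IsLocalization.isNoetherianRing S A inferInstance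
  have : Module.Finite R F := Module.Finite.iff_fg.2 hFG
  have : Module.Finite A (F.localized' A S f) := .of_isLocalizedModule S (F.toLocalized' A S f)
  exact .of_injective (Submodule.inclusion
    (torsionBySet_map_le_localized' S f (IsNoetherian.noetherian a) hF))
    (Submodule.inclusion_injective _)

theorem isArtinian_of_isLocalizedModule [IsNoetherianRing R]
    (hS : ∀ q : Ideal R, q.IsPrime → a ≤ q → Disjoint (S : Set R) q → q ∈ a.minimalPrimes)
    (hM : IsPowerTorsion a M) {F : Submodule R M} (hFG : F.FG)
    (hF : ∀ m ∈ Submodule.torsionBySet R M (a : Set R), ∃ s ∈ S, s • m ∈ F) :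
    IsArtinian A M' := by
  have : IsNoetherianRing A := IsLocalization.isNoetherianRing S A inferInstance
  have := finite_torsionBySet_map S (A := A) f hFG hF
  have : IsArtinian A (Submodule.torsionBySet A M' (a.map (algebraMap R A) : Set A)) :=
    isArtinian_of_support_isMaximal fun q hq ↦
      isMaximal_of_map_le_of_forall_mem_minimalPrimes S hS q.isPrime
        (le_asIdeal_of_mem_support_torsionBySet hq)
  exact isArtinian_of_isArtinian_torsionBySet (IsNoetherian.noetherian _) (hM.map_algebraMap S f)

end Localization

section ZeroOne

variable {R : Type u} [CommRing R] {P : ObjectProperty (ModuleCat.{u} R)} [P.IsSerreClass]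
  {N M : Type u} [AddCommGroup N] [Module R N] [AddCommGroup M] [Module R M] {a : Ideal R}
  {S : Submonoid R}

lemma prop_ext_torsionBy (y : R) (h : ∀ i ≤ 1, P (.of R (ExtModule R N M i))) :
    ∀ i ≤ 1, P (.of R (ExtModule R N (Submodule.torsionBy R M y) i)) := by
  have h₀ := prop_ext_zero_of_injective
    (LinearMap.range (LinearMap.lsmul R M y)).subtype_injective (h 0 zero_le_one)
  rintro (_ | i) hi
  · exact prop_ext_zero_of_injective (Submodule.subtype_injective _) (h 0 zero_le_one)
  · obtain rfl : i = 0 := by lia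
    exact prop_ext_left (Submodule.subtype_injective _) (exact_torsionBy_subtype_rangeRestrict y)
      (LinearMap.surjective_rangeRestrict _) h₀ (h 1 le_rfl)

lemma prop_ext_range_lsmul {y : R} {i : ℕ} (h : P (.of R (ExtModule R N M i)))
    (hy : P (.of R (ExtModule R N (Submodule.torsionBy R M y) (i + 1)))) :
    P (.of R (ExtModule R N (LinearMap.range (LinearMap.lsmul R M y)) i)) :=
  prop_ext_right (Submodule.subtype_injective _) (exact_torsionBy_subtype_rangeRestrict y)
    (LinearMap.surjective_rangeRestrict _) h hy

theorem prop_ext_of_prop_ext_zero_one [IsNoetherianRing R]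
    (hloc : ∀ (G : Type u) [AddCommGroup G] [Module R G], IsPowerTorsion a G →
      P (.of R (ExtModule R (R ⧸ a) G 0)) → (∀ g : G, ∃ s ∈ S, s • g = 0) →
      ∀ i, P (.of R (ExtModule R (R ⧸ a) G i)))
    (hstab : ∀ (G : Type u) [AddCommGroup G] [Module R G], IsPowerTorsion a G →
      P (.of R (ExtModule R (R ⧸ a) G 0)) → ∀ x : R, ∃ n, ∀ g : G, ∃ s ∈ S, ∃ g' : G,
      s • x ^ n • g = x ^ (n + 1) • g')
    (hM : IsPowerTorsion a M) (h : ∀ i ≤ 1, P (.of R (ExtModule R (R ⧸ a) M i))) (i : ℕ) :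
    P (.of R (ExtModule R (R ⧸ a) M i)) := by
  induction hI : Module.annihilator R M using WellFoundedGT.induction generalizing M i with
  | _ I ih =>
  subst hI
  by_cases ha : a ≤ (Module.annihilator R M).radical
  · obtain ⟨n, hn⟩ := Ideal.exists_pow_le_of_le_radical_of_fg ha (IsNoetherian.noetherian a)
    exact prop_ext (prop_of_pow_le_annihilator hn (h 0 zero_le_one)) i
  obtain ⟨x, hxa, hx⟩ := SetLike.not_le_iff_exists.1 ha
  obtain ⟨n, hn⟩ := hstab M hM (h 0 zero_le_one) x
  have hxn (k : ℕ) : x ^ k ∉ Module.annihilator R M := fun hk ↦ hx ⟨k, hk⟩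
  let D := LinearMap.range (LinearMap.lsmul R M (x ^ n))
  have hMn (j : ℕ) : P (.of R (ExtModule R (R ⧸ a) (Submodule.torsionBy R M (x ^ n)) j)) :=
    ih _ (annihilator_lt_annihilator_torsionBy (hxn n) (f := .id) Function.injective_id)
      (hM.of_injective (Submodule.subtype_injective _)) (prop_ext_torsionBy _ h) j rfl
  have hD (i : ℕ) (hi : i ≤ 1) := prop_ext_range_lsmul (h i hi) (hMn (i + 1))
  have haD : IsPowerTorsion a D := hM.of_injective D.subtype_injective
  have hDx (j : ℕ) : P (.of R (ExtModule R (R ⧸ a) (Submodule.torsionBy R D x) j)) :=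
    ih _ (annihilator_lt_annihilator_torsionBy (pow_one x ▸ hxn 1) D.subtype_injective)
      (haD.of_injective (Submodule.subtype_injective _)) (prop_ext_torsionBy _ hD) j rfl
  have hxD := prop_ext_range_lsmul (hD 1 le_rfl) (hDx 2)
  have hquot (j : ℕ) :
      P (.of R (ExtModule R (R ⧸ a) (D ⧸ LinearMap.range (LinearMap.lsmul R D x)) j)) := by
    refine hloc _ (haD.of_surjective (Submodule.mkQ_surjective _))
      (prop_ext_quotient _ (hD 0 zero_le_one) hxD) (fun g ↦ ?_) j
    obtain ⟨⟨_, m, rfl⟩, rfl⟩ := Submodule.mkQ_surjective _ g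
    obtain ⟨s, hs, m', hm'⟩ := hn m
    refine ⟨s, hs, ?_⟩
    rw [← map_smul, Submodule.mkQ_apply, Submodule.Quotient.mk_eq_zero]
    exact ⟨⟨_, m', rfl⟩, Subtype.ext (by simp [hm', pow_succ', mul_smul])⟩
  exact prop_ext_mid (Submodule.subtype_injective _) (exact_torsionBy_subtype_rangeRestrict (x ^ n))
    (LinearMap.surjective_rangeRestrict _) (hMn i)
    (prop_ext_of_smul_left_eq_zero (smul_quotient_eq_zero hxa) (hDx i) fun j _ ↦ hquot j)

end ZeroOne

section Stabilization

variable {R : Type u} [CommRing R] [IsNoetherianRing R] {S : Submonoid R} {a : Ideal R}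
  {M : Type*} [AddCommGroup M] [Module R M]

theorem exists_smul_pow_smul_eq_pow_succ_smul
    (hS : ∀ q : Ideal R, q.IsPrime → a ≤ q → Disjoint (S : Set R) q → q ∈ a.minimalPrimes)
    (hM : IsPowerTorsion a M) {F : Submodule R M} (hFG : F.FG)
    (hF : ∀ m ∈ Submodule.torsionBySet R M (a : Set R), ∃ s ∈ S, s • m ∈ F) (x : R) :
    ∃ n : ℕ, ∀ m : M, ∃ s ∈ S, ∃ m' : M, s • x ^ n • m = x ^ (n + 1) • m' := by
  let f := LocalizedModule.mkLinearMap S M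
  have : IsArtinian (Localization S) (LocalizedModule S M) :=
    isArtinian_of_isLocalizedModule S f hS hM hFG hF
  obtain ⟨n, hn⟩ := exists_pow_smul_eq_pow_succ_smul (M := LocalizedModule S M)
    (algebraMap R (Localization S) x)
  refine ⟨n, fun m ↦ ?_⟩
  obtain ⟨u, hu⟩ := hn (f m)
  obtain ⟨⟨m₁, t⟩, ht : t • u = f m₁⟩ := IsLocalizedModule.surj S f u
  rw [← map_pow, ← map_pow, algebraMap_smul, algebraMap_smul] at hu
  have hf : f (t • x ^ n • m) = f (x ^ (n + 1) • m₁) := by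
    rw [Submonoid.smul_def, map_smul, map_smul, map_smul, hu, ← ht, Submonoid.smul_def, smul_comm]
  obtain ⟨c, hc⟩ := (IsLocalizedModule.eq_iff_exists S f).1 hf
  refine ⟨c * t, (c * t).2, c • m₁, ?_⟩
  rw [mul_smul, smul_comm (x ^ (n + 1)) c]
  exact hc

end Stabilization

section KrullDimension

variable {R : Type*} [CommRing R] {a b p q : Ideal R} {n : ℕ}

lemma ringKrullDim_quotient_anti (h : a ≤ b) : ringKrullDim (R ⧸ b) ≤ ringKrullDim (R ⧸ a) :=
  ringKrullDim_le_of_surjective (Ideal.Quotient.factor h) (Ideal.Quotient.factor_surjective h)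

lemma ringKrullDim_quotient_add_one_le_of_lt [p.IsPrime] (h : p < q) :
    ringKrullDim (R ⧸ q) + 1 ≤ ringKrullDim (R ⧸ p) := by
  obtain ⟨x, hxq, hxp⟩ := SetLike.exists_of_lt h
  refine ringKrullDim_succ_le_of_surjective (Ideal.Quotient.factor h.le)
    (Ideal.Quotient.factor_surjective h.le) (r := Ideal.Quotient.mk p x) ?_ ?_
  · exact mem_nonZeroDivisors_of_ne_zero fun hx ↦ hxp (Ideal.Quotient.eq_zero_iff_mem.1 hx)
  · rwa [Ideal.Quotient.factor_mk, Ideal.Quotient.eq_zero_iff_mem]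

lemma ringKrullDim_quotient_le_of_forall_isPrime {d : WithBot ℕ∞}
    (h : ∀ q : Ideal R, q.IsPrime → b ≤ q → ringKrullDim (R ⧸ q) ≤ d) :
    ringKrullDim (R ⧸ b) ≤ d := by
  rw [ringKrullDim_quotient]
  refine iSup_le fun l ↦ le_trans ?_ (h l.head.1.asIdeal l.head.1.isPrime l.head.2)
  rw [ringKrullDim_quotient]
  let l' : LTSeries (PrimeSpectrum.zeroLocus (l.head.1.asIdeal : Set R)) :=
    { length := l.length
      toFun := fun i ↦ ⟨l i, l.head_le i⟩
      step := fun i ↦ l.step i }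
  exact Order.LTSeries.length_le_krullDim l'

lemma ringKrullDim_quotient_sup_span_singleton_le (ha : ringKrullDim (R ⧸ a) ≤ n + 1) {y : R}
    (hy : ∀ p ∈ a.minimalPrimes, n + 1 ≤ ringKrullDim (R ⧸ p) → y ∉ p) :
    ringKrullDim (R ⧸ a ⊔ Ideal.span {y}) ≤ n := by
  refine ringKrullDim_quotient_le_of_forall_isPrime fun q _ hq ↦ ?_
  have hyq : y ∈ q := hq (le_sup_right (a := a) (Ideal.mem_span_singleton_self y))
  obtain ⟨p, hp, hpq⟩ := Ideal.exists_minimalPrimes_le (le_sup_left.trans hq)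
  have : p.IsPrime := hp.1.1
  obtain rfl | hlt := hpq.eq_or_lt
  · exact (ENat.WithBot.lt_add_one_iff).1 (not_le.1 fun h ↦ hy p hp h hyq)
  · exact ENat.WithBot.add_le_add_one_right_iff.1 <|
      (ringKrullDim_quotient_add_one_le_of_lt hlt).trans
        ((ringKrullDim_quotient_anti hp.1.2).trans ha)

lemma mem_minimalPrimes_of_ringKrullDim_le_one (ha : ringKrullDim (R ⧸ a) ≤ 1) [hq : q.IsPrime]
    (haq : a ≤ q) (hmax : ¬ q.IsMaximal) : q ∈ a.minimalPrimes := by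
  obtain ⟨p, hp, hpq⟩ := Ideal.exists_minimalPrimes_le haq
  have : p.IsPrime := hp.1.1
  obtain rfl | hlt := hpq.eq_or_lt
  · exact hp
  obtain ⟨m, hm, hqm⟩ := Ideal.exists_le_maximal q hq.ne_top
  have hqm : q < m := hqm.lt_of_ne fun h ↦ hmax (h ▸ hm)
  have hq₀ : ringKrullDim (R ⧸ q) ≤ 0 := ENat.WithBot.add_le_add_one_right_iff.1 <|
    (ringKrullDim_quotient_add_one_le_of_lt hlt).trans
      ((ringKrullDim_quotient_anti hp.1.2).trans (ha.trans_eq (zero_add 1).symm))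
  have hm₀ : ringKrullDim (R ⧸ m) = ⊥ := (ENat.WithBot.add_one_le_zero_iff _).1
    ((ringKrullDim_quotient_add_one_le_of_lt hqm).trans hq₀)
  exact (ringKrullDim_nonneg_of_nontrivial.not_gt (hm₀ ▸ WithBot.bot_lt_coe 0)).elim

lemma ringKrullDim_quotient_map_localization_le [p.IsPrime] (hp : ¬ p.IsMaximal)
    {A : Type*} [CommRing A] [Algebra R A] [IsLocalization.AtPrime A p]
    (ha : ringKrullDim (R ⧸ a) ≤ n + 1) :
    ringKrullDim (A ⧸ a.map (algebraMap R A)) ≤ n := by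
  obtain ⟨m, hm, hpm⟩ := Ideal.exists_le_maximal p Ideal.IsPrime.ne_top'
  have hpm : p < m := hpm.lt_of_ne fun h ↦ hp (h ▸ hm)
  let φ (Q : PrimeSpectrum.zeroLocus (a.map (algebraMap R A) : Set A)) :
      PrimeSpectrum.zeroLocus (a : Set R) :=
    ⟨Q.1.comap (algebraMap R A), fun r hr ↦ Q.2 (Ideal.mem_map_of_mem _ hr)⟩
  have hφ : StrictMono φ := fun Q Q' hQ ↦
    (IsLocalization.orderEmbedding p.primeCompl A).strictMono hQ
  have hφp (Q) : (φ Q).1.asIdeal ≤ p := Set.disjoint_compl_left_iff_subset.1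
    ((IsLocalization.isPrime_iff_isPrime_disjoint p.primeCompl A _).1 Q.1.isPrime).2
  rw [ringKrullDim_quotient]
  refine iSup_le fun l ↦ ENat.WithBot.add_le_add_one_right_iff.1 (le_trans ?_ ha)
  let m' : PrimeSpectrum.zeroLocus (a : Set R) :=
    ⟨⟨m, hm.isPrime⟩, fun r hr ↦ hpm.le (hφp l.head ((φ l.head).2 hr))⟩
  rw [ringKrullDim_quotient]
  refine le_trans ?_ (Order.LTSeries.length_le_krullDim ((l.map φ hφ).snoc m' ?_))
  · rw [RelSeries.snoc_length, LTSeries.map_length, Nat.cast_succ]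
  · exact (hφp l.last).trans_lt hpm

end KrullDimension

section GenericFiniteness

variable {R : Type*} [CommRing R] {a : Ideal R} {S : Submonoid R} {X Y Z : Type*}
  [AddCommGroup X] [Module R X] [AddCommGroup Y] [Module R Y] [AddCommGroup Z] [Module R Z]

/-- `X` is generically finite with respect to `S` if a single element of `S`, which is allowed to
depend on `X`, multiplies `X` into a finitely generated submodule, up to powers: this is a form of
finiteness of `X_f` over `R_f` for some `f ∈ S` in which denominators do not occur. -/
def IsGenericallyFinite (S : Submonoid R) (X : Type*) [AddCommGroup X] [Module R X] : Prop :=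
  ∃ f ∈ S, ∃ F : Submodule R X, F.FG ∧ ∀ x, ∃ n : ℕ, f ^ n • x ∈ F

namespace IsGenericallyFinite

variable (S X) in
lemma of_finite [Module.Finite R X] : IsGenericallyFinite S X :=
  ⟨1, S.one_mem, ⊤, Module.Finite.fg_top, fun _ ↦ ⟨0, trivial⟩⟩

lemma of_injective [IsNoetherianRing R] (h : IsGenericallyFinite S Y) {f : X →ₗ[R] Y}
    (hf : Function.Injective f) : IsGenericallyFinite S X := by
  obtain ⟨s, hs, F, hF, hsF⟩ := h
  have : Module.Finite R F := Module.Finite.iff_fg.2 hF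
  refine ⟨s, hs, F.comap f, Submodule.fg_of_fg_map_injective f hf
    (Submodule.FG.of_le hF (Submodule.map_comap_le f F)), fun x ↦ ?_⟩
  obtain ⟨n, hn⟩ := hsF (f x)
  exact ⟨n, by rwa [Submodule.mem_comap, map_smul]⟩

lemma of_surjective (h : IsGenericallyFinite S X) {f : X →ₗ[R] Y} (hf : Function.Surjective f) :
    IsGenericallyFinite S Y := by
  obtain ⟨s, hs, F, hF, hsF⟩ := h
  refine ⟨s, hs, F.map f, hF.map f, fun y ↦ ?_⟩
  obtain ⟨x, rfl⟩ := hf y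
  obtain ⟨n, hn⟩ := hsF x
  exact ⟨n, by rw [← map_smul]; exact Submodule.mem_map_of_mem hn⟩

lemma of_exact (hX : IsGenericallyFinite S X) (hZ : IsGenericallyFinite S Z) {f : X →ₗ[R] Y}
    {g : Y →ₗ[R] Z} (hfg : Function.Exact f g) (hg : Function.Surjective g) :
    IsGenericallyFinite S Y := by
  obtain ⟨s, hs, F, hF, hsF⟩ := hX
  obtain ⟨t, ht, G, ⟨c, rfl⟩, htG⟩ := hZ
  let F' : Submodule R Y := Submodule.span R (Function.surjInv hg '' c)
  have hF' : F'.map g = Submodule.span R c := by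
    simp only [F', Submodule.map_span, Set.image_image, Function.surjInv_eq hg, Set.image_id']
  refine ⟨s * t, S.mul_mem hs ht, F.map f ⊔ F',
    (hF.map f).sup (Submodule.fg_span (c.finite_toSet.image _)), fun y ↦ ?_⟩
  obtain ⟨n, hn⟩ := htG (g y)
  obtain ⟨y', hy', hgy'⟩ : g (t ^ n • y) ∈ F'.map g := by rwa [hF', map_smul]
  obtain ⟨x, hx⟩ := (hfg (t ^ n • y - y')).1 (by rw [map_sub, hgy', sub_self])
  obtain ⟨m, hm⟩ := hsF x
  have hy : (s * t) ^ (n + m) • y = (s ^ n * t ^ m) • (f (s ^ m • x) + s ^ m • y') := by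
    rw [map_smul, hx, ← smul_add, sub_add_cancel, smul_smul, smul_smul]
    congr 1
    ring
  exact ⟨n + m, hy ▸ Submodule.smul_mem _ _
    (Submodule.add_mem_sup (Submodule.mem_map_of_mem hm) (F'.smul_mem _ hy'))⟩

lemma exists_pow_smul_eq_zero (hX : IsGenericallyFinite S X) (h : ∀ x : X, ∃ s ∈ S, s • x = 0) :
    ∃ f ∈ S, ∀ x : X, ∃ n : ℕ, f ^ n • x = 0 := by
  obtain ⟨f, hf, F, hF, hfF⟩ := hX
  obtain ⟨g, hg, hgF⟩ := exists_mem_annihilator_of_forall_exists_smul_eq_zero hF fun x _ ↦ h x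
  refine ⟨f * g, S.mul_mem hf hg, fun x ↦ ?_⟩
  obtain ⟨n, hn⟩ := hfF x
  exact ⟨n + 1, by
    rw [show (f * g) ^ (n + 1) = (f * g ^ n) * (g * f ^ n) by ring, mul_smul, mul_smul g,
      Submodule.mem_annihilator.1 hgF _ hn, smul_zero]⟩

end IsGenericallyFinite

lemma exists_smul_eq_zero_of_torsionBySet (ha : a.FG) (hX : IsPowerTorsion a X)
    (h : ∀ x ∈ Submodule.torsionBySet R X (a : Set R), ∃ s ∈ S, s • x = 0) (x : X) :
    ∃ s ∈ S, s • x = 0 := by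
  obtain ⟨k, hk⟩ := hX x
  induction k generalizing x with
  | zero => exact ⟨1, S.one_mem, hk 1 (by simp)⟩
  | succ k ih =>
    obtain ⟨s, hs, hsx⟩ := exists_mem_forall_smul_smul_eq_zero ha fun r hr ↦
      ih (r • x) fun t ht ↦ by rw [← mul_smul]; exact hk _ (Ideal.mul_mem_mul ht hr)
    obtain ⟨t, ht, htx⟩ := h (s • x) ((Submodule.mem_torsionBySet_iff _ _).2 fun r ↦
      (smul_comm _ _ _).trans (hsx r r.2))
    exact ⟨t * s, S.mul_mem ht hs, by rwa [mul_smul]⟩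

end GenericFiniteness

section MinimalPrimesCompl

variable {R : Type*} [CommRing R] {a : Ideal R}

/-- The multiplicative set of the elements which avoid every minimal prime of `a`; its localization
is an artinian ring modulo `a`. -/
def minimalPrimesCompl (a : Ideal R) : Submonoid R where
  carrier := {f | ∀ p ∈ a.minimalPrimes, f ∉ p}
  one_mem' _ hp h := hp.1.1.ne_top ((Ideal.eq_top_iff_one _).2 h)
  mul_mem' hx hy p hp h := (hp.1.1.mem_or_mem h).elim (hx p hp) (hy p hp)

lemma mem_minimalPrimes_of_disjoint_minimalPrimesCompl [IsNoetherianRing R]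
    {q : Ideal R} (hq : q.IsPrime) (haq : a ≤ q)
    (hdisj : Disjoint (minimalPrimesCompl a : Set R) q) : q ∈ a.minimalPrimes := by
  by_contra hqa
  obtain ⟨x, hxq, hx⟩ := exists_mem_forall_notMem (a := q)
    (Ideal.finite_minimalPrimes_of_isNoetherianRing R a) fun p hp ↦
      ⟨hp.1.1, fun hqp ↦ hqa ((hqp.antisymm (hp.2 ⟨hq, haq⟩ hqp)) ▸ hp)⟩
  exact Set.disjoint_left.1 hdisj hx hxq

end MinimalPrimesCompl

/-- Generic finiteness as a property of objects of the category of modules. -/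
def genericallyFinite {R : Type u} [CommRing R] (S : Submonoid R) :
    ObjectProperty (ModuleCat.{u} R) :=
  fun X ↦ IsGenericallyFinite S X

instance isSerreClass_genericallyFinite {R : Type u} [CommRing R] [IsNoetherianRing R]
    (S : Submonoid R) : (genericallyFinite S).IsSerreClass where
  exists_zero := ⟨.of R PUnit, ModuleCat.isZero_of_subsingleton _, .of_finite S PUnit⟩
  prop_of_mono f hf hY := hY.of_injective ((ModuleCat.mono_iff_injective f).1 hf)
  prop_of_epi f hf hX := hX.of_surjective ((ModuleCat.epi_iff_surjective f).1 hf)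
  prop_X₂_of_shortExact hT h₁ h₃ := h₁.of_exact h₃
    ((ShortComplex.ShortExact.moduleCat_exact_iff_function_exact _).1 hT.exact)
    ((ModuleCat.epi_iff_surjective _).1 hT.epi_g)

section DimensionOne

variable {R : Type u} [CommRing R] [IsNoetherianRing R] {a : Ideal R} {S : Submonoid R}
  {M : Type u} [AddCommGroup M] [Module R M]

theorem isGenericallyFinite_ext
    (hS : ∀ q : Ideal R, q.IsPrime → a ≤ q → Disjoint (S : Set R) q → q ∈ a.minimalPrimes)
    (hM : IsPowerTorsion a M) (h : ∀ i ≤ 1, IsGenericallyFinite S (ExtModule R (R ⧸ a) M i))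
    (i : ℕ) : IsGenericallyFinite S (ExtModule R (R ⧸ a) M i) := by
  refine prop_ext_of_prop_ext_zero_one (P := genericallyFinite S) (S := S)
    (fun G _ _ hG hG₀ hGS i ↦ ?_) (fun G _ _ hG hG₀ x ↦ ?_) hM h i
  · obtain ⟨f, hf, hfG⟩ := IsGenericallyFinite.exists_pow_smul_eq_zero
      ((prop_ext_zero_quotient_iff a).1 hG₀) fun g ↦
        (hGS g).imp fun s hs ↦ ⟨hs.1, Subtype.ext hs.2⟩
    have hGf (g : G) : ∃ s ∈ Submonoid.powers f, s • g = 0 :=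
      exists_smul_eq_zero_of_torsionBySet (S := .powers f) (IsNoetherian.noetherian a) hG
        (fun g hg ↦ (hfG ⟨g, hg⟩).elim fun n hn ↦ ⟨f ^ n, ⟨n, rfl⟩, congrArg Subtype.val hn⟩) g
    have hGfin : IsGenericallyFinite S G := ⟨f, hf, ⊥, Submodule.fg_bot, fun g ↦ by
      obtain ⟨_, ⟨n, rfl⟩, hn⟩ := hGf g
      exact ⟨n, hn⟩⟩
    exact prop_ext (P := genericallyFinite S) hGfin i
  · obtain ⟨f, hf, F, hF, hfF⟩ : IsGenericallyFinite S _ := (prop_ext_zero_quotient_iff a).1 hG₀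
    refine exists_smul_pow_smul_eq_pow_succ_smul hS hG (hF.map (Submodule.subtype _))
      (fun g hg ↦ ?_) x
    obtain ⟨n, hn⟩ := hfF ⟨g, hg⟩
    exact ⟨f ^ n, S.pow_mem hf n, Submodule.mem_map_of_mem hn⟩

theorem finite_ext_of_ringKrullDim_le_one (ha : ringKrullDim (R ⧸ a) ≤ 1)
    (hM : IsPowerTorsion a M) (h : ∀ i ≤ 1, Module.Finite R (ExtModule R (R ⧸ a) M i)) (i : ℕ) :
    Module.Finite R (ExtModule R (R ⧸ a) M i) := by
  refine prop_ext_of_prop_ext_zero_one (P := ModuleCat.isFG R) (S := minimalPrimesCompl a)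
    (fun G _ _ hG hG₀ hGS i ↦ ?_) (fun G _ _ hG hG₀ x ↦ ?_) hM h i
  · have hT : Module.Finite R (Submodule.torsionBySet R G (a : Set R)) :=
      (prop_ext_zero_quotient_iff a).1 hG₀
    have : IsArtinian R (Submodule.torsionBySet R G (a : Set R)) := by
      refine isArtinian_of_support_isMaximal fun q hq ↦ ?_
      by_contra hmax
      have hqa := mem_minimalPrimes_of_ringKrullDim_le_one ha
        (le_asIdeal_of_mem_support_torsionBySet hq) hmax
      obtain ⟨u, hu⟩ := Module.mem_support_iff_exists_annihilator.1 hq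
      obtain ⟨s, hs, hsu⟩ := hGS u
      exact hs _ hqa (hu ((Submodule.mem_annihilator_span_singleton _ _).2 (Subtype.ext hsu)))
    have : IsArtinian R G := isArtinian_of_isArtinian_torsionBySet (IsNoetherian.noetherian a) hG
    exact prop_ext_of_isArtinian a hG₀ i
  · have hT : Module.Finite R (Submodule.torsionBySet R G (a : Set R)) :=
      (prop_ext_zero_quotient_iff a).1 hG₀
    exact exists_smul_pow_smul_eq_pow_succ_smul
      (fun q ↦ mem_minimalPrimes_of_disjoint_minimalPrimesCompl) hG (Module.Finite.iff_fg.1 hT)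
      (fun g hg ↦ ⟨1, one_mem _, by rwa [one_smul]⟩) x

end DimensionOne

section SupSpanSingleton

lemma IsPowerTorsion.sup {R : Type*} [CommRing R] {a b : Ideal R} {M : Type*} [AddCommGroup M]
    [Module R M] (ha : IsPowerTorsion a M) (hb : IsPowerTorsion b M) :
    IsPowerTorsion (a ⊔ b) M := fun m ↦ by
  obtain ⟨k, hk⟩ := ha m
  obtain ⟨l, hl⟩ := hb m
  refine ⟨k + l, fun r hr ↦ ?_⟩
  obtain ⟨s, hs, t, ht, rfl⟩ := Submodule.mem_sup.1 (Ideal.sup_pow_add_le_pow_sup_pow hr)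
  rw [add_smul, hk s hs, hl t ht, add_zero]

lemma isPowerTorsion_span_singleton {R : Type*} [CommRing R] {M : Type*} [AddCommGroup M]
    [Module R M] {y : R} (hy : ∀ m : M, y • m = 0) : IsPowerTorsion (Ideal.span {y}) M :=
  fun m ↦ ⟨1, fun r hr ↦ by
    obtain ⟨c, rfl⟩ := Ideal.mem_span_singleton'.1 (pow_one (Ideal.span {y}) ▸ hr)
    rw [mul_smul, hy, smul_zero]⟩

variable {R : Type u} [CommRing R] [IsNoetherianRing R] {a : Ideal R} {y : R}
  {M : Type u} [AddCommGroup M] [Module R M]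

lemma finite_ext_quotient_sup_span_singleton
    (hay : ringKrullDim (R ⧸ a ⊔ Ideal.span {y}) ≤ 1) (hM : IsPowerTorsion a M)
    (h : ∀ i ≤ 2, Module.Finite R (ExtModule R (R ⧸ a) M i)) (i : ℕ) :
    Module.Finite R (ExtModule R (R ⧸ a ⊔ Ideal.span {y}) M i) := by
  set b := a ⊔ Ideal.span {y}
  let Q := M ⧸ LinearMap.range (LinearMap.lsmul R M y)
  have hyb : y ∈ b := le_sup_right (a := a) (Ideal.mem_span_singleton_self y)
  have hbM (i : ℕ) (hi : i ≤ 2) : Module.Finite R (ExtModule R (R ⧸ b) M i) :=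
    prop_ext_of_prop_ext_quotient (P := ModuleCat.isFG R) h
      ((IsPowerTorsion.quotient b).mono le_sup_left) hi
  have hT (i : ℕ) : Module.Finite R (ExtModule R (R ⧸ b) (Submodule.torsionBy R M y) i) :=
    finite_ext_of_ringKrullDim_le_one hay
      ((hM.of_injective (Submodule.subtype_injective _)).sup
        (isPowerTorsion_span_singleton (Submodule.smul_torsionBy y)))
      (prop_ext_torsionBy (P := ModuleCat.isFG R) y fun i hi ↦ hbM i (hi.trans one_le_two)) i
  have hQ (i : ℕ) : Module.Finite R (ExtModule R (R ⧸ b) Q i) :=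
    finite_ext_of_ringKrullDim_le_one hay
      ((hM.of_surjective (Submodule.mkQ_surjective _)).sup
        (isPowerTorsion_span_singleton (lsmul_quotient_range_eq_zero y)))
      (fun i hi ↦ prop_ext_quotient (P := ModuleCat.isFG R) _ (hbM i (hi.trans one_le_two))
        (prop_ext_range_lsmul (hbM (i + 1) (Nat.succ_le_succ hi)) (hT (i + 2)))) i
  exact prop_ext_of_smul_left_eq_zero (P := ModuleCat.isFG R) (smul_quotient_eq_zero hyb) (hT i)
    fun j _ ↦ hQ j

theorem finite_torsionBy_ext (hay : ringKrullDim (R ⧸ a ⊔ Ideal.span {y}) ≤ 1)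
    (hM : IsPowerTorsion a M) (h : ∀ i ≤ 2, Module.Finite R (ExtModule R (R ⧸ a) M i)) (i : ℕ) :
    Module.Finite R (Submodule.torsionBy R (ExtModule R (R ⧸ a) M i) y) :=
  prop_torsionBy_ext (P := ModuleCat.isFG R) (a := a)
    (fun _ _ _ _ _ hN hyN ↦ prop_ext_of_prop_ext_quotient (P := ModuleCat.isFG R)
      (fun k _ ↦ finite_ext_quotient_sup_span_singleton hay hM h k)
      (hN.sup (isPowerTorsion_span_singleton hyN)) le_rfl)
    (IsPowerTorsion.quotient a) i

end SupSpanSingleton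

section BaseChange

open TensorProduct

lemma nonempty_linearEquiv_of_exact {S : Type*} [Ring S] {A B C A' B' C' : Type*}
    [AddCommGroup A] [Module S A] [AddCommGroup B] [Module S B] [AddCommGroup C] [Module S C]
    [AddCommGroup A'] [Module S A'] [AddCommGroup B'] [Module S B'] [AddCommGroup C'] [Module S C']
    {f : A →ₗ[S] B} {g : B →ₗ[S] C} {f' : A' →ₗ[S] B'} {g' : B' →ₗ[S] C'}
    (hfg : Function.Exact f g) (hg : Function.Surjective g)
    (hfg' : Function.Exact f' g') (hg' : Function.Surjective g') (α : A ≃ₗ[S] A') (β : B ≃ₗ[S] B')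
    (h : β.toLinearMap ∘ₗ f = f' ∘ₗ α.toLinearMap) : Nonempty (C ≃ₗ[S] C') := by
  have hmap : f.range.map β.toLinearMap = f'.range := by
    rw [← LinearMap.range_comp, h, LinearMap.range_comp_of_range_eq_top _ α.range]
  exact ⟨(hfg.linearEquivOfSurjective hg).symm.trans
    ((Submodule.Quotient.equiv _ _ β hmap).trans (hfg'.linearEquivOfSurjective hg'))⟩

namespace ExtModule

section Projective

variable {R : Type u} [CommRing R] {M A B C : Type u} [AddCommGroup M] [Module R M]
  [AddCommGroup A] [Module R A] [AddCommGroup B] [Module R B] [AddCommGroup C] [Module R C]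

lemma nonempty_linearEquiv_left (e : A ≃ₗ[R] B) (i : ℕ) :
    Nonempty (ExtModule R A M i ≃ₗ[R] ExtModule R B M i) := by
  have hid {A : Type u} [AddCommGroup A] [Module R A] :
      precomp M (LinearMap.id : A →ₗ[R] A) i = LinearMap.id := by
    have hone {X : Type u} [AddCommGroup X] [Module R X] :
        LinearMap.lsmul R X 1 = LinearMap.id := LinearMap.ext (one_smul R)
    rw [← hone, precomp_lsmul, hone]
  exact ⟨LinearEquiv.ofLinearMap (precomp M e.symm.toLinearMap i) (precomp M e.toLinearMap i)
    (by rw [← precomp_comp, e.comp_symm, hid]) (by rw [← precomp_comp, e.symm_comp, hid])⟩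

variable {f : A →ₗ[R] B} {g : B →ₗ[R] C} [Module.Projective R B] (hf : Function.Injective f)
  (hfg : Function.Exact f g) (hg : Function.Surjective g)
include hf hfg hg

lemma exists_exact_precomp_surjective (i : ℕ) :
    ∃ δ : ExtModule R A M i →ₗ[R] ExtModule R C M (i + 1),
      Function.Exact (precomp M f i) δ ∧ Function.Surjective δ := by
  obtain ⟨δ, h₁, h₂⟩ := exists_exact_precomp_connecting (M := M) hf hfg hg i
  have := subsingleton_succ_of_projective (N := B) (M := M) (R := R) i
  exact ⟨δ, h₁, fun x ↦ (h₂ x).1 (Subsingleton.elim _ _)⟩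

lemma nonempty_linearEquiv_succ (i : ℕ) :
    Nonempty (ExtModule R A M (i + 1) ≃ₗ[R] ExtModule R C M (i + 2)) := by
  obtain ⟨δ, h, hδ⟩ := exists_exact_precomp_surjective (M := M) hf hfg hg (i + 1)
  have := subsingleton_succ_of_projective (N := B) (M := M) (R := R) i
  refine ⟨LinearEquiv.ofBijective δ ⟨(injective_iff_map_eq_zero δ).2 fun x hx ↦ ?_, hδ⟩⟩
  obtain ⟨z, rfl⟩ := (h x).1 hx
  rw [Subsingleton.elim z 0, map_zero]

end Projective

variable {R : Type u} [CommRing R] [IsNoetherianRing R] (S : Type u) [CommRing S] [Algebra R S]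
  [Module.Flat R S] (N F M : Type u) [AddCommGroup N] [Module R N] [Module.Finite R N]
  [AddCommGroup F] [Module R F] [Module.Finite R F] [AddCommGroup M] [Module R M]

/-- Flat base change of `Hom_R(N, M)`, in the form of `Ext^0`. -/
noncomputable def baseChangeZeroEquiv :
    S ⊗[R] ExtModule R N M 0 ≃ₗ[S] ExtModule S (S ⊗[R] N) (S ⊗[R] M) 0 :=
  have : Module.FinitePresentation R N := Module.finitePresentation_of_finite R N
  ((zeroEquiv R N M).baseChange R S).trans
    ((Module.FinitePresentation.isBaseChange_map R N M S).equiv.trans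
      (zeroEquiv S (S ⊗[R] N) (S ⊗[R] M)).symm)

variable {N F}

lemma zeroEquiv_baseChangeZeroEquiv_tmul (s : S) (x : ExtModule R N M 0) :
    zeroEquiv S (S ⊗[R] N) (S ⊗[R] M) (baseChangeZeroEquiv S N M (s ⊗ₜ x)) =
      s • (zeroEquiv R N M x).baseChange S := by
  simp [baseChangeZeroEquiv, IsBaseChange.equiv_tmul]

lemma baseChangeZeroEquiv_comp_precomp (f : N →ₗ[R] F) :
    (baseChangeZeroEquiv S N M).toLinearMap ∘ₗ (precomp M f 0).baseChange S =
      precomp (S ⊗[R] M) (f.baseChange S) 0 ∘ₗ (baseChangeZeroEquiv S F M).toLinearMap := by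
  ext x
  induction x with
  | zero => rw [map_zero, map_zero]
  | add x y hx hy => rw [map_add, map_add, hx, hy]
  | tmul s x =>
    apply (zeroEquiv S (S ⊗[R] N) (S ⊗[R] M)).injective
    simp only [LinearMap.comp_apply, LinearEquiv.coe_coe, LinearMap.baseChange_tmul,
      zeroEquiv_precomp, zeroEquiv_baseChangeZeroEquiv_tmul, LinearMap.baseChange_comp,
      LinearMap.smul_comp]

theorem nonempty_baseChange_linearEquiv (i : ℕ) :
    Nonempty (S ⊗[R] ExtModule R N M i ≃ₗ[S] ExtModule S (S ⊗[R] N) (S ⊗[R] M) i) := by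
  induction i generalizing N with
  | zero => exact ⟨baseChangeZeroEquiv S N M⟩
  | succ i ih =>
    obtain ⟨n, g, hg⟩ := Module.Finite.exists_fin' R N
    have hf : Function.Injective (LinearMap.ker g).subtype := Submodule.subtype_injective _
    have hfg := LinearMap.exact_subtype_ker_map g
    have hfS : Function.Injective ((LinearMap.ker g).subtype.baseChange S) :=
      Module.Flat.lTensor_preserves_injective_linearMap _ hf
    have hfgS : Function.Exact ((LinearMap.ker g).subtype.baseChange S) (g.baseChange S) :=
      lTensor_exact S hfg hg
    have hgS : Function.Surjective (g.baseChange S) := LinearMap.lTensor_surjective S hg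
    cases i with
    | zero =>
      obtain ⟨δ, h, hδ⟩ := exists_exact_precomp_surjective (M := M) hf hfg hg 0
      obtain ⟨δ', h', hδ'⟩ := exists_exact_precomp_surjective (M := S ⊗[R] M) hfS hfgS hgS 0
      have hS : Function.Exact ((precomp M (LinearMap.ker g).subtype 0).baseChange S)
          (δ.baseChange S) := lTensor_exact S h hδ
      have hδS : Function.Surjective (δ.baseChange S) := LinearMap.lTensor_surjective S hδ
      exact nonempty_linearEquiv_of_exact hS hδS h' hδ' _ _ (baseChangeZeroEquiv_comp_precomp S M _)
    | succ i =>
      obtain ⟨e⟩ := nonempty_linearEquiv_succ (M := M) hf hfg hg i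
      obtain ⟨e'⟩ := nonempty_linearEquiv_succ (M := S ⊗[R] M) hfS hfgS hgS i
      obtain ⟨eS⟩ := ih (N := LinearMap.ker g)
      exact ⟨(e.symm.baseChange R S).trans (eS.trans e')⟩

theorem nonempty_baseChange_quotient_linearEquiv (a : Ideal R) (i : ℕ) :
    Nonempty (S ⊗[R] ExtModule R (R ⧸ a) M i ≃ₗ[S]
      ExtModule S (S ⧸ a.map (algebraMap R S)) (S ⊗[R] M) i) := by
  obtain ⟨e⟩ := nonempty_baseChange_linearEquiv (R := R) (N := R ⧸ a) S M i
  obtain ⟨e'⟩ := nonempty_linearEquiv_left (M := S ⊗[R] M)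
    (Algebra.TensorProduct.quotIdealMapEquivTensorQuot S a).symm.toLinearEquiv i
  exact ⟨e.trans e'⟩

lemma finite_quotient_baseChange {a : Ideal R} {i : ℕ}
    (h : Module.Finite R (ExtModule R (R ⧸ a) M i)) :
    Module.Finite S (ExtModule S (S ⧸ a.map (algebraMap R S)) (S ⊗[R] M) i) := by
  obtain ⟨e⟩ := nonempty_baseChange_quotient_linearEquiv S M a i
  exact Module.Finite.equiv e

end ExtModule

lemma IsPowerTorsion.baseChange {R : Type*} [CommRing R] (S : Type*) [CommRing S] [Algebra R S]
    {M : Type*} [AddCommGroup M] [Module R M] {a : Ideal R} (h : IsPowerTorsion a M) :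
    IsPowerTorsion (a.map (algebraMap R S)) (S ⊗[R] M) := by
  intro x
  induction x with
  | zero => exact ⟨0, fun _ _ ↦ smul_zero _⟩
  | tmul s m =>
    obtain ⟨n, hn⟩ := h m
    have hle : (a.map (algebraMap R S)) ^ n ≤
        LinearMap.ker (LinearMap.toSpanSingleton S (S ⊗[R] M) (s ⊗ₜ[R] m)) := by
      rw [← Ideal.map_pow, Ideal.map_le_iff_le_comap]
      intro r hr
      rw [Ideal.mem_comap, LinearMap.mem_ker, LinearMap.toSpanSingleton_apply, algebraMap_smul,
        ← TensorProduct.tmul_smul, hn r hr, TensorProduct.tmul_zero]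
    exact ⟨n, fun r hr ↦ hle hr⟩
  | add x y hx hy =>
    obtain ⟨k, hk⟩ := hx
    obtain ⟨l, hl⟩ := hy
    refine ⟨max k l, fun r hr ↦ ?_⟩
    rw [smul_add, hk r (Ideal.pow_le_pow_right (le_max_left k l) hr),
      hl r (Ideal.pow_le_pow_right (le_max_right k l) hr), add_zero]

end BaseChange

section ArtinianQuotient

open TensorProduct

lemma exists_fg_forall_exists_smul_mem {R A X Y : Type*} [CommRing R] [CommRing A] [Algebra R A]
    [AddCommGroup X] [Module R X] [AddCommGroup Y] [Module R Y] [Module A Y] [IsScalarTower R A Y]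
    (S : Submonoid R) [IsLocalization S A] (f : X →ₗ[R] Y) [IsLocalizedModule S f]
    [Module.Finite A Y] :
    ∃ F : Submodule R X, F.FG ∧ ∀ x, ∃ s ∈ S, s • x ∈ F := by
  obtain ⟨t, ht⟩ := Module.Finite.fg_top (R := A) (M := Y)
  choose w hw using IsLocalizedModule.surj S f
  let F := Submodule.span R ((fun y ↦ (w y).1) '' (t : Set Y))
  have hF : F.localized' A S f = ⊤ := by
    rw [eq_top_iff, ← ht, Submodule.span_le]
    exact fun y hy ↦ Submodule.mem_localized' .. |>.2
      ⟨(w y).1, Submodule.subset_span ⟨y, hy, rfl⟩, (w y).2,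
        IsLocalizedModule.mk'_eq_iff.2 (hw y).symm⟩
  refine ⟨F, Submodule.fg_span (t.finite_toSet.image _), fun x ↦ ?_⟩
  obtain ⟨m, hm, s, hms⟩ := (Submodule.mem_localized' ..).1 (hF ▸ Submodule.mem_top : f x ∈ _)
  obtain ⟨c, hc⟩ := (IsLocalizedModule.eq_iff_exists S f).1
    ((IsLocalizedModule.mk'_eq_iff.1 hms).trans (map_smul f (s : R) x).symm)
  refine ⟨c * s, mul_mem c.2 s.2, ?_⟩
  rw [mul_smul]
  exact hc ▸ F.smul_mem _ hm

section Quotient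

variable {R : Type u} [CommRing R] [IsNoetherianRing R] {X : Type u} [AddCommGroup X] [Module R X]

lemma finite_torsionBy_quotient {F : Submodule R X} (hF : F.FG) (y : R)
    [hX : Module.Finite R (Submodule.torsionBy R X y)] :
    Module.Finite R (Submodule.torsionBy R (X ⧸ F) y) := by
  have hF' : Module.Finite R F := Module.Finite.iff_fg.2 hF
  let K := F.comap (LinearMap.lsmul R X y)
  have hK : Module.Finite R K := by
    refine prop_of_prop_ker (P := ModuleCat.isFG R)
      ((LinearMap.lsmul R X y).restrict fun _ hx ↦ hx : K →ₗ[R] F) ?_ hF'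
    refine prop_of_injective (P := ModuleCat.isFG R)
      (f := (K.subtype ∘ₗ Submodule.subtype _).codRestrict (Submodule.torsionBy R X y)
        fun x ↦ congrArg Subtype.val x.2) ?_ hX
    exact fun _ _ h ↦ Subtype.ext (Subtype.ext (congrArg (Submodule.torsionBy R X y).subtype h))
  have hmem (x : X) : F.mkQ x ∈ Submodule.torsionBy R (X ⧸ F) y ↔ x ∈ K := by
    rw [Submodule.mem_torsionBy_iff, ← map_smul, Submodule.mkQ_apply,
      Submodule.Quotient.mk_eq_zero]
    rfl
  refine prop_of_surjective (P := ModuleCat.isFG R)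
    (f := (F.mkQ ∘ₗ K.subtype).codRestrict _ fun x ↦ (hmem x).2 x.2) (fun x ↦ ?_) hK
  obtain ⟨w, hw⟩ := F.mkQ_surjective x.1
  exact ⟨⟨w, (hmem w).1 (hw ▸ x.2)⟩, Subtype.ext hw⟩

lemma exists_fg_isArtinian_quotient {a : Ideal R} {f : R}
    (hdim : ringKrullDim (R ⧸ a ⊔ Ideal.span {f}) ≤ 1) (haX : ∀ r ∈ a, ∀ x : X, r • x = 0)
    {F₀ : Submodule R X} (hF₀ : F₀.FG) (hfF₀ : ∀ x, ∃ n : ℕ, f ^ n • x ∈ F₀)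
    (htor : Module.Finite R (Submodule.torsionBy R X f))
    (hloc : ∀ p ∈ (a ⊔ Ideal.span {f}).minimalPrimes, ¬ p.IsMaximal →
      ∃ F : Submodule R X, F.FG ∧ ∀ x, ∃ s ∉ p, s • x ∈ F) :
    ∃ F : Submodule R X, F.FG ∧ IsArtinian R (X ⧸ F) := by
  let T := {p ∈ (a ⊔ Ideal.span {f}).minimalPrimes | ¬ p.IsMaximal}
  have : Finite T :=
    ((Ideal.finite_minimalPrimes_of_isNoetherianRing R _).subset (Set.sep_subset _ _)).to_subtype
  choose G hG hG' using fun p : T ↦ hloc p p.2.1 p.2.2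
  let F := F₀ ⊔ ⨆ p, G p
  have hF : F.FG := hF₀.sup (Submodule.fg_iSup _ hG)
  have hpow (w : X ⧸ F) : ∃ n : ℕ, f ^ n • w = 0 := by
    obtain ⟨x, rfl⟩ := F.mkQ_surjective w
    obtain ⟨n, hn⟩ := hfF₀ x
    exact ⟨n, (Submodule.Quotient.mk_eq_zero F).2 (Submodule.mem_sup_left hn)⟩
  have : Module.Finite R (Submodule.torsionBy R (X ⧸ F) f) := finite_torsionBy_quotient hF f
  have : IsArtinian R (Submodule.torsionBy R (X ⧸ F) f) := by
    refine isArtinian_of_support_isMaximal fun q hq ↦ ?_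
    by_contra hmax
    obtain ⟨⟨w, hw⟩, hwq⟩ := Module.mem_support_iff_exists_annihilator.1 hq
    obtain ⟨x, rfl⟩ := F.mkQ_surjective w
    have hmem {r : R} (hr : r • x ∈ F) : r ∈ q.asIdeal :=
      hwq ((Submodule.mem_annihilator_span_singleton _ _).2
        (Subtype.ext ((Submodule.Quotient.mk_eq_zero F).2 hr)))
    have haq : a ≤ q.asIdeal := fun r hr ↦ hmem (haX r hr x ▸ F.zero_mem)
    have hfq : f ∈ q.asIdeal := hmem ((Submodule.Quotient.mk_eq_zero F).1 hw)
    have hqT : q.asIdeal ∈ T :=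
      ⟨mem_minimalPrimes_of_ringKrullDim_le_one hdim
        (sup_le haq ((Ideal.span_singleton_le_iff_mem _).2 hfq)) hmax, hmax⟩
    obtain ⟨s, hs, hsx⟩ := hG' ⟨_, hqT⟩ x
    exact hs (hmem (Submodule.mem_sup_right (Submodule.mem_iSup_of_mem _ hsx)))
  exact ⟨F, hF, isArtinian_of_isArtinian_torsionBy hpow⟩

end Quotient

variable {R : Type u} [CommRing R] [IsNoetherianRing R] {a : Ideal R} {M : Type u}
  [AddCommGroup M] [Module R M]

lemma exists_fg_forall_exists_smul_mem_ext {p : Ideal R} [p.IsPrime] (hp : ¬ p.IsMaximal)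
    (ha : ringKrullDim (R ⧸ a) ≤ 2) (hM : IsPowerTorsion a M)
    (h : ∀ i ≤ 1, Module.Finite R (ExtModule R (R ⧸ a) M i)) (i : ℕ) :
    ∃ F : Submodule R (ExtModule R (R ⧸ a) M i), F.FG ∧ ∀ x, ∃ s ∉ p, s • x ∈ F := by
  let A := Localization.AtPrime p
  have : IsNoetherianRing A := IsLocalization.isNoetherianRing p.primeCompl A inferInstance
  have hA : Module.Finite A (ExtModule A (A ⧸ a.map (algebraMap R A)) (A ⊗[R] M) i) :=
    finite_ext_of_ringKrullDim_le_one (ringKrullDim_quotient_map_localization_le hp ha)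
      (hM.baseChange A) (fun i hi ↦ finite_quotient_baseChange A M (h i hi)) i
  obtain ⟨e⟩ := nonempty_baseChange_quotient_linearEquiv A M a i
  have : Module.Finite A (A ⊗[R] ExtModule R (R ⧸ a) M i) := Module.Finite.equiv e.symm
  have : IsLocalizedModule p.primeCompl (TensorProduct.mk R A (ExtModule R (R ⧸ a) M i) 1) :=
    (isLocalizedModule_iff_isBaseChange p.primeCompl A _).2 (TensorProduct.isBaseChange R _ A)
  exact exists_fg_forall_exists_smul_mem (A := A) p.primeCompl
    (TensorProduct.mk R A (ExtModule R (R ⧸ a) M i) 1)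

theorem exists_fg_isArtinian_quotient_ext (ha : ringKrullDim (R ⧸ a) ≤ 2)
    (hM : IsPowerTorsion a M) (h : ∀ i ≤ 2, Module.Finite R (ExtModule R (R ⧸ a) M i)) (i : ℕ) :
    ∃ F : Submodule R (ExtModule R (R ⧸ a) M i),
      F.FG ∧ IsArtinian R (ExtModule R (R ⧸ a) M i ⧸ F) := by
  have h' (i : ℕ) (hi : i ≤ 1) : Module.Finite R (ExtModule R (R ⧸ a) M i) :=
    h i (hi.trans one_le_two)
  obtain ⟨f, hf, F₀, hF₀, hfF₀⟩ := isGenericallyFinite_ext (S := minimalPrimesCompl a)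
    (fun _ ↦ mem_minimalPrimes_of_disjoint_minimalPrimesCompl) hM
    (fun i hi ↦ have := h' i hi; .of_finite _ _) i
  have hdim : ringKrullDim (R ⧸ a ⊔ Ideal.span {f}) ≤ 1 :=
    ringKrullDim_quotient_sup_span_singleton_le ha fun p hp _ ↦ hf p hp
  refine exists_fg_isArtinian_quotient hdim
    (fun r hr ↦ smul_eq_zero_of_left (smul_quotient_eq_zero hr)) hF₀ hfF₀
    (finite_torsionBy_ext hdim hM h i) fun p hp hmax ↦ ?_
  have : p.IsPrime := hp.1.1
  exact exists_fg_forall_exists_smul_mem_ext hmax ha hM h' i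

end ArtinianQuotient

section MinimalNonFinite

/-- A module that is not finitely generated although all its proper submodules are: the obstruction
to finite generation carried by an artinian module. -/
def IsMinimalNonFinite (R D : Type*) [CommRing R] [AddCommGroup D] [Module R D] : Prop :=
  ¬ Module.Finite R D ∧ ∀ V : Submodule R D, V ≠ ⊤ → V.FG

variable {R D Q : Type*} [CommRing R] [AddCommGroup D] [Module R D] [AddCommGroup Q] [Module R Q]

lemma exists_isMinimalNonFinite_submodule [IsArtinian R Q] (h : ¬ Module.Finite R Q) :
    ∃ D : Submodule R Q, IsMinimalNonFinite R D := by
  obtain ⟨D, hD, hmin⟩ :=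
    IsArtinian.set_has_minimal {V : Submodule R Q | ¬ V.FG} ⟨⊤, fun hfg ↦ h ⟨hfg⟩⟩
  refine ⟨D, fun hf ↦ hD (Module.Finite.iff_fg.mp hf), fun V hV ↦ ?_⟩
  by_contra hfg
  refine hmin (V.map D.subtype)
    (fun hf ↦ hfg (Submodule.fg_of_fg_map_injective D.subtype D.subtype_injective hf)) ?_
  simpa only [Submodule.map_subtype_top] using
    Submodule.map_strictMono_of_injective D.subtype_injective hV.lt_top

namespace IsMinimalNonFinite

lemma finite_torsionBy (h : IsMinimalNonFinite R D) {s : R} (hs : s ∉ Module.annihilator R D) :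
    Module.Finite R (Submodule.torsionBy R D s) := by
  refine Module.Finite.iff_fg.mpr (h.2 _ fun htop ↦ hs (Module.mem_annihilator.mpr fun d ↦ ?_))
  exact (Submodule.mem_torsionBy_iff s d).mp (htop ▸ Submodule.mem_top)

lemma smul_surjective (h : IsMinimalNonFinite R D) {s : R} (hs : s ∉ Module.annihilator R D) :
    Function.Surjective (s • · : D → D) := by
  let f := LinearMap.lsmul R D s
  change Function.Surjective f
  by_contra hsurj
  refine h.1 ⟨Submodule.fg_of_fg_map_of_fg_inf_ker f ?_ ?_⟩
  · rw [Submodule.map_top]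
    exact h.2 _ (mt LinearMap.range_eq_top.mp hsurj)
  · rw [top_inf_eq]
    exact Module.Finite.iff_fg.mp (h.finite_torsionBy hs)

-- The elements killed by a power of `s` form a submodule `V`. If it were proper, it would be
-- finitely generated, hence killed by one `s ^ n`; but `d = s ^ n • y` with `y ∈ V`.
lemma exists_pow_smul_eq_zero (h : IsMinimalNonFinite R D) {s : R} {d : D} (hd : d ≠ 0)
    (hsd : s • d = 0) (x : D) : ∃ n : ℕ, s ^ n • x = 0 := by
  by_cases hs : s ∈ Module.annihilator R D
  · exact ⟨1, by rw [pow_one, Module.mem_annihilator.mp hs]⟩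
  let V : Submodule R D := Submodule.torsion' R D (Submonoid.powers s)
  have mem_V {z : D} : z ∈ V ↔ ∃ n : ℕ, s ^ n • z = 0 := by
    simp [V, Submodule.mem_torsion'_iff, Submonoid.smul_def, Submonoid.mem_powers_iff]
  rw [← mem_V]
  by_contra hx
  obtain ⟨_, ⟨n, rfl⟩, hn⟩ := exists_mem_annihilator_of_forall_exists_smul_eq_zero
    (S := Submonoid.powers s) (h.2 V fun htop ↦ hx (htop ▸ Submodule.mem_top)) fun z hz ↦ by
      obtain ⟨k, hk⟩ := mem_V.mp hz
      exact ⟨s ^ k, ⟨k, rfl⟩, hk⟩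
  obtain ⟨y, rfl : s ^ n • y = d⟩ := by
    simpa only [smul_iterate] using (h.smul_surjective hs).iterate n d
  have hy : y ∈ V := mem_V.mpr ⟨n + 1, by rw [pow_succ', mul_smul, hsd]⟩
  exact hd (congrArg Subtype.val (Module.mem_annihilator.mp hn ⟨y, hy⟩))

lemma exists_isMaximal_isPowerTorsion [IsNoetherianRing R] [IsArtinian R D]
    (h : IsMinimalNonFinite R D) : ∃ m : Ideal R, m.IsMaximal ∧ IsPowerTorsion m D := by
  have : Nontrivial D := by
    by_contra hD
    rw [not_nontrivial_iff_subsingleton] at hD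
    exact h.1 inferInstance
  obtain ⟨V, hV⟩ := IsAtomic.exists_atom (Submodule R D)
  have : IsSimpleModule R V := isSimpleModule_iff_isAtom.mpr hV
  obtain ⟨d, hdV, hd⟩ := V.exists_mem_ne_zero_of_ne_bot hV.1
  refine ⟨Module.annihilator R V, IsSimpleModule.annihilator_isMaximal, fun x ↦ ?_⟩
  have hle : Module.annihilator R V ≤ (Ideal.torsionOf R D x).radical := fun s hs ↦
    h.exists_pow_smul_eq_zero hd
      (congrArg Subtype.val (Module.mem_annihilator.mp hs (⟨d, hdV⟩ : V))) x
  obtain ⟨n, hn⟩ := Ideal.exists_pow_le_of_le_radical_of_fg hle (IsNoetherian.noetherian _)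
  exact ⟨n, fun r hr ↦ hn hr⟩

end IsMinimalNonFinite

end MinimalNonFinite

section Endomorphisms

variable {S : Type*} [CommRing S] {I : Ideal S} {s : S} {D N : Type*} [AddCommGroup D] [Module S D]
  [AddCommGroup N] [Module S N]

lemma IsPowerTorsion.exists_pow_le_annihilator [Module.Finite S D] (h : IsPowerTorsion I D) :
    ∃ k : ℕ, I ^ k ≤ Module.annihilator S D := by
  obtain ⟨T, hT⟩ := Module.Finite.fg_top (R := S) (M := D)
  choose n hn using h
  refine ⟨T.sup n, ?_⟩
  rw [← Submodule.annihilator_top, ← hT]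
  refine fun r hr ↦ (Submodule.mem_annihilator_span _ r).mpr fun d ↦ ?_
  exact hn d r (Ideal.pow_le_pow_right (Finset.le_sup d.2) hr)

lemma isPrecomplete_fin_fun [IsPrecomplete I S] (n : ℕ) : IsPrecomplete I (Fin n → S) := by
  refine AdicCompletion.of_surjective_iff.mp fun x ↦ ?_
  choose L hL using fun i ↦ AdicCompletion.of_surjective I S (AdicCompletion.piEquivFin I n x i)
  refine ⟨L, (AdicCompletion.piEquivFin I n).injective (funext fun i ↦ ?_)⟩
  rw [← hL, AdicCompletion.piEquivFin_apply]
  rfl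

lemma finite_of_finite_quotient_smul_top [IsPrecomplete I S] [IsHausdorff I N]
    [Module.Finite S (N ⧸ (I • ⊤ : Submodule S N))] : Module.Finite S N := by
  obtain ⟨n, f, hf⟩ := Module.Finite.exists_fin' S (N ⧸ (I • ⊤ : Submodule S N))
  obtain ⟨g, rfl⟩ := Module.projective_lifting_property (Submodule.mkQ _) f
    (Submodule.mkQ_surjective _)
  have := isPrecomplete_fin_fun (I := I) n
  exact Module.Finite.of_surjective g (surjective_of_mkQ_comp_surjective hf)

lemma exists_eq_smul_of_torsionBy_le_ker (hs : Function.Surjective (s • · : D → D))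
    {φ : D →ₗ[S] N} (hφ : Submodule.torsionBy S D s ≤ LinearMap.ker φ) :
    ∃ ψ : D →ₗ[S] N, φ = s • ψ := by
  let e := (LinearMap.lsmul S D s).quotKerEquivOfSurjective hs
  let ψ := (LinearMap.ker (LinearMap.lsmul S D s)).liftQ φ hφ ∘ₗ e.symm.toLinearMap
  refine ⟨ψ, LinearMap.ext fun x ↦ ?_⟩
  have he : e.symm (s • x) = Submodule.Quotient.mk x := by
    rw [LinearEquiv.symm_apply_eq]
    rfl
  rw [LinearMap.smul_apply, ← map_smul, LinearMap.comp_apply, LinearEquiv.coe_coe, he]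
  rfl

lemma IsPowerTorsion.isHausdorff_linearMap (h : IsPowerTorsion I D) :
    IsHausdorff I (D →ₗ[S] N) := by
  refine ⟨fun φ hφ ↦ LinearMap.ext fun x ↦ ?_⟩
  obtain ⟨k, hk⟩ := h x
  have hle : (I ^ k • ⊤ : Submodule S (D →ₗ[S] N)) ≤ LinearMap.ker (LinearMap.applyₗ (R := S) x) :=
    Submodule.smul_le.mpr fun r hr ψ _ ↦ by
      rw [LinearMap.mem_ker, LinearMap.applyₗ_apply_apply, LinearMap.smul_apply, ← map_smul,
        hk r hr, map_zero]
  exact hle (SModEq.zero.mp (hφ k))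

variable [IsNoetherianRing S] [IsPrecomplete I S] (hD : IsPowerTorsion I D) (hsI : s ∈ I)
  (hs : Function.Surjective (s • · : D → D)) [Module.Finite S (Submodule.torsionBy S D s)]

include hD hsI hs

-- An endomorphism vanishing on `0 :_D s` is a multiple of `s`, so `End D / I • End D` is a
-- subquotient of the finite module `Hom (0 :_D s, 0 :_D s)`.
lemma IsPowerTorsion.finite_end : Module.Finite S (Module.End S D) := by
  have := hD.isHausdorff_linearMap (N := D)
  let K := Submodule.torsionBy S D s
  have hK (φ : Module.End S D) : ∀ x ∈ K, φ x ∈ K := fun x hx ↦ by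
    rw [Submodule.mem_torsionBy_iff] at hx ⊢
    rw [← map_smul, hx, map_zero]
  let ρ : Module.End S D →ₗ[S] Module.End S K :=
    { toFun := fun φ ↦ φ.restrict (hK φ)
      map_add' := fun _ _ ↦ rfl
      map_smul' := fun _ _ ↦ rfl }
  have hker : LinearMap.ker ρ ≤ I • ⊤ := fun φ hφ ↦ by
    obtain ⟨ψ, rfl⟩ := exists_eq_smul_of_torsionBy_le_ker hs (φ := φ) fun x hx ↦
      congrArg Subtype.val (LinearMap.congr_fun hφ ⟨x, hx⟩)
    exact Submodule.smul_mem_smul hsI Submodule.mem_top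
  have : Module.Finite S (Module.End S D ⧸ LinearMap.ker ρ) :=
    Module.Finite.equiv ρ.quotKerEquivRange.symm
  have : Module.Finite S (Module.End S D ⧸ (I • ⊤ : Submodule S (Module.End S D))) :=
    Module.Finite.of_surjective _ (Submodule.factor_surjective hker)
  exact finite_of_finite_quotient_smul_top (I := I)

lemma IsPowerTorsion.le_of_annihilator_le {q : Ideal S} [q.IsPrime]
    (hq : Module.annihilator S D ≤ q) (hsq : s ∈ q) : I ≤ q := by
  let H := Module.End S D
  let J : Ideal S := Ideal.span {s}
  have := hD.finite_end hsI hs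
  obtain ⟨k, hk⟩ := IsPowerTorsion.exists_pow_le_annihilator
    (hD.of_injective (Submodule.torsionBy S D s).subtype_injective)
  have hHq : Module.annihilator S H ≤ q := fun t ht ↦ hq <| Module.mem_annihilator.mpr fun d ↦
    LinearMap.congr_fun (Module.mem_annihilator.mp ht LinearMap.id) d
  have hmem : (⟨q, inferInstance⟩ : PrimeSpectrum S) ∈
      Module.support S (H ⧸ (J • ⊤ : Submodule S H)) := by
    rw [Module.support_quotient, Module.support_eq_zeroLocus]
    exact ⟨hHq, (Ideal.span_singleton_le_iff_mem q).mpr hsq⟩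
  have hann : I ^ k ≤ Module.annihilator S (H ⧸ (J • ⊤ : Submodule S H)) := fun t ht ↦ by
    rw [Submodule.annihilator_quotient, Submodule.mem_colon]
    intro φ _
    obtain ⟨ψ, hψ⟩ := exists_eq_smul_of_torsionBy_le_ker hs (φ := t • φ) fun x hx ↦ by
      have htx : t • x = 0 := congrArg Subtype.val (Module.mem_annihilator.mp (hk ht) ⟨x, hx⟩)
      rw [LinearMap.mem_ker, LinearMap.smul_apply, ← map_smul, htx, map_zero]
    rw [hψ]
    exact Submodule.smul_mem_smul (Ideal.mem_span_singleton_self s) Submodule.mem_top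
  exact Ideal.IsPrime.le_of_pow_le (hann.trans (Module.annihilator_le_of_mem_support hmem))

end Endomorphisms

lemma IsMinimalNonFinite.ringKrullDim_quotient_annihilator_le_one {S D : Type*} [CommRing S]
    [IsNoetherianRing S] [IsLocalRing S] [IsPrecomplete (IsLocalRing.maximalIdeal S) S]
    [AddCommGroup D] [Module S D] (h : IsMinimalNonFinite S D)
    (hD : IsPowerTorsion (IsLocalRing.maximalIdeal S) D) :
    ringKrullDim (S ⧸ Module.annihilator S D) ≤ 1 := by
  refine ringKrullDim_quotient_le_of_forall_isPrime fun p hp hDp ↦ ?_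
  rw [← Nat.cast_one, ← Ring.krullDimLE_iff, Ring.krullDimLE_one_iff_of_noZeroDivisors]
  intro J hJ hJp
  obtain ⟨x, hxJ, hx⟩ := Submodule.exists_mem_ne_zero_of_ne_bot hJ
  obtain ⟨s, rfl⟩ := Ideal.Quotient.mk_surjective x
  have hsp : s ∉ p := mt Ideal.Quotient.eq_zero_iff_mem.mpr hx
  let q := J.comap (Ideal.Quotient.mk p)
  have hpq : p ≤ q := fun t ht ↦ by
    rw [Ideal.mem_comap, Ideal.Quotient.eq_zero_iff_mem.mpr ht]
    exact J.zero_mem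
  have hq : q ≤ IsLocalRing.maximalIdeal S :=
    IsLocalRing.le_maximalIdeal (Ideal.IsPrime.ne_top inferInstance)
  have hq' : IsLocalRing.maximalIdeal S ≤ q := by
    have := h.finite_torsionBy (mt (@hDp s) hsp)
    exact hD.le_of_annihilator_le (hq hxJ) (h.smul_surjective (mt (@hDp s) hsp))
      (hDp.trans hpq) hxJ
  have : q.IsMaximal := hq.antisymm hq' ▸ IsLocalRing.maximalIdeal.isMaximal S
  rw [← Ideal.map_comap_of_surjective _ Ideal.Quotient.mk_surjective J]
  exact Ideal.IsMaximal.map_of_surjective_of_ker_le Ideal.Quotient.mk_surjective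
    (Ideal.mk_ker.trans_le hpq)

section Completion

variable {R : Type*} [CommRing R] {I : Ideal R}

lemma exists_sub_algebraMap_mem_map_pow (hI : I.FG) (k : ℕ) (s : AdicCompletion I R) :
    ∃ r : R, s - algebraMap R (AdicCompletion I R) r ∈
      (I.map (algebraMap R (AdicCompletion I R))) ^ k := by
  obtain ⟨r, hr⟩ := Ideal.Quotient.mk_surjective (AdicCompletion.evalₐ I k s)
  refine ⟨r, ?_⟩
  have heval : AdicCompletion.evalₐ I k (s - algebraMap R (AdicCompletion I R) r) = 0 := by
    rw [map_sub, ← hr, AlgHom.commutes, Ideal.Quotient.algebraMap_eq, sub_self]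
  have hmem : s - algebraMap R (AdicCompletion I R) r ∈
      (I ^ k • ⊤ : Submodule R (AdicCompletion I R)) := by
    rw [AdicCompletion.pow_smul_top_eq_ker_eval hI, LinearMap.mem_ker,
      ← AdicCompletion.factor_evalₐ_eq_eval I _ (by simp), heval, map_zero]
  rwa [Ideal.smul_top_eq_map, Ideal.map_pow] at hmem

variable {σ : Type*} {x : σ → R}

lemma idealOfVars_pow_le_comap_aeval (hx : ∀ i, x i ∈ I) (k : ℕ) :
    MvPolynomial.idealOfVars σ R ^ k ≤
      (I ^ k).comap (MvPolynomial.aeval x : MvPolynomial σ R →ₐ[R] R).toRingHom := by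
  rw [← Ideal.map_le_iff_le_comap, Ideal.map_pow]
  refine Ideal.pow_right_mono (Ideal.map_le_iff_le_comap.mpr ?_) k
  rw [MvPolynomial.idealOfVars, Ideal.span_le]
  rintro _ ⟨i, rfl⟩
  simpa using hx i

variable [Finite σ]

/-- Evaluation of power series over `R` at elements of `I`, with values in `R ⧸ I ^ k`: evaluate the
truncation in total degree `k`. -/
noncomputable def powerSeriesEvalQuotient (hx : ∀ i, x i ∈ I) (k : ℕ) :
    MvPowerSeries σ R →+* R ⧸ I ^ k :=
  (Ideal.quotientMap (I ^ k) (MvPolynomial.aeval x : MvPolynomial σ R →ₐ[R] R).toRingHom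
    (idealOfVars_pow_le_comap_aeval hx k)).comp (MvPowerSeries.truncTotalAlgHom σ R k).toRingHom

lemma powerSeriesEvalQuotient_coe (hx : ∀ i, x i ∈ I) (k : ℕ) (p : MvPolynomial σ R) :
    powerSeriesEvalQuotient hx k (p : MvPowerSeries σ R) =
      algebraMap R (R ⧸ I ^ k) (MvPolynomial.aeval x p) :=
  congrArg (Ideal.quotientMap (I ^ k) (MvPolynomial.aeval x : MvPolynomial σ R →ₐ[R] R).toRingHom
    (idealOfVars_pow_le_comap_aeval hx k)) ((MvPowerSeries.truncTotalAlgHom σ R k).commutes p)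

lemma factorPow_comp_powerSeriesEvalQuotient (hx : ∀ i, x i ∈ I) {k l : ℕ} (hkl : k ≤ l) :
    (Ideal.Quotient.factorPow I hkl).comp (powerSeriesEvalQuotient hx l) =
      powerSeriesEvalQuotient hx k := by
  ext p
  change Ideal.Quotient.mk (I ^ k) (MvPolynomial.aeval x (MvPowerSeries.truncTotal l p)) =
    Ideal.Quotient.mk (I ^ k) (MvPolynomial.aeval x (MvPowerSeries.truncTotal k p))
  rw [Ideal.Quotient.mk_eq_mk_iff_sub_mem, ← map_sub]
  exact idealOfVars_pow_le_comap_aeval hx k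
    (MvPowerSeries.truncTotal_sub_truncTotal_mem_pow_idealOfVars hkl le_rfl p)

/-- Evaluation of power series over `R` at elements of `I`, with values in the `I`-adic
completion. -/
noncomputable def powerSeriesEval (hx : ∀ i, x i ∈ I) :
    MvPowerSeries σ R →+* AdicCompletion I R :=
  AdicCompletion.liftRingHom I (powerSeriesEvalQuotient hx)
    (factorPow_comp_powerSeriesEvalQuotient hx)

lemma powerSeriesEval_coe (hx : ∀ i, x i ∈ I) (p : MvPolynomial σ R) :
    powerSeriesEval hx (p : MvPowerSeries σ R) =
      algebraMap R (AdicCompletion I R) (MvPolynomial.aeval x p) := by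
  refine AdicCompletion.ext_evalₐ fun k ↦ ?_
  rw [powerSeriesEval, AdicCompletion.evalₐ_liftRingHom, AlgHom.commutes,
    powerSeriesEvalQuotient_coe]

lemma map_powerSeriesEval_span_X (hx : ∀ i, x i ∈ I) (hI : Ideal.span (Set.range x) = I) :
    (Ideal.span (Set.range MvPowerSeries.X)).map (powerSeriesEval hx) =
      I.map (algebraMap R (AdicCompletion I R)) := by
  have hX (i : σ) : powerSeriesEval hx (MvPowerSeries.X i) =
      algebraMap R (AdicCompletion I R) (x i) := by
    rw [← MvPolynomial.coe_X, powerSeriesEval_coe, MvPolynomial.aeval_X]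
  calc (Ideal.span (Set.range MvPowerSeries.X)).map (powerSeriesEval hx)
      = (Ideal.span (Set.range x)).map (algebraMap R (AdicCompletion I R)) := by
        rw [Ideal.map_span, Ideal.map_span, ← Set.range_comp, ← Set.range_comp]
        exact congrArg (fun f ↦ Ideal.span (Set.range f)) (funext hX)
    _ = I.map (algebraMap R (AdicCompletion I R)) := by
        exact congrArg (Ideal.map (algebraMap R (AdicCompletion I R))) hI

lemma powerSeriesEval_surjective (hx : ∀ i, x i ∈ I) (hI : Ideal.span (Set.range x) = I) :
    Function.Surjective (powerSeriesEval hx) := by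
  have hfg : I.FG := hI ▸ Submodule.fg_span (Set.finite_range x)
  let J : Ideal (MvPowerSeries σ R) := Ideal.span (Set.range MvPowerSeries.X)
  have hJ : J.map (powerSeriesEval hx) = I.map (algebraMap R (AdicCompletion I R)) :=
    map_powerSeriesEval_span_X hx hI
  have := AdicCompletion.isAdicComplete_self I hfg
  have : IsHausdorff (J.map (powerSeriesEval hx)) (AdicCompletion I R) := by
    rw [hJ]
    infer_instance
  refine surjective_of_mk_map_comp_surjective (I := J) _ fun z ↦ ?_
  obtain ⟨s, rfl⟩ := Ideal.Quotient.mk_surjective z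
  obtain ⟨r, hr⟩ := exists_sub_algebraMap_mem_map_pow hfg 1 s
  refine ⟨((MvPolynomial.C r : MvPolynomial σ R) : MvPowerSeries σ R), Eq.symm ?_⟩
  rw [RingHom.comp_apply, powerSeriesEval_coe, Ideal.Quotient.mk_eq_mk_iff_sub_mem, hJ,
    MvPolynomial.aeval_C]
  exact pow_one (I.map (algebraMap R (AdicCompletion I R))) ▸ hr

lemma isNoetherianRing_adicCompletion [IsNoetherianRing R] (I : Ideal R) :
    IsNoetherianRing (AdicCompletion I R) := by
  obtain ⟨n, x, hx⟩ := Submodule.fg_iff_exists_fin_generating_family.mp (IsNoetherian.noetherian I)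
  exact isNoetherianRing_of_surjective _ _ _
    (powerSeriesEval_surjective (fun i ↦ hx ▸ Submodule.subset_span ⟨i, rfl⟩) hx)

end Completion

section Dimension

variable {R S : Type*} [CommRing R] [CommRing S] [IsLocalRing S] {m : Ideal R}
  [hmax : m.IsMaximal] {f : R →+* S}

lemma comap_maximalIdeal_eq (hm : m.map f = IsLocalRing.maximalIdeal S) :
    (IsLocalRing.maximalIdeal S).comap f = m :=
  (hmax.eq_of_le (Ideal.IsPrime.ne_top inferInstance)
    (Ideal.map_le_iff_le_comap.mp hm.le)).symm

variable [IsNoetherianRing R] [IsNoetherianRing S]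

lemma ringKrullDim_le_of_map_eq_maximalIdeal (hm : m.map f = IsLocalRing.maximalIdeal S) :
    ringKrullDim S ≤ ringKrullDim R := by
  classical
  obtain ⟨T, hT, hcard⟩ := Ideal.exists_finset_card_eq_height_of_isNoetherianRing m
  have hspan : (Ideal.span (T : Set R)).map f = Ideal.span (T.image f : Set S) := by
    rw [Ideal.map_span, Finset.coe_image]
  have hmin : IsLocalRing.maximalIdeal S ∈ (Ideal.span (T.image f : Set S)).minimalPrimes := by
    rw [← hspan, ← hm]
    refine ⟨⟨hm ▸ inferInstance, Ideal.map_mono hT.1.2⟩, fun Q ⟨hQ, hTQ⟩ hQm ↦ ?_⟩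
    refine Ideal.map_le_iff_le_comap.mpr
      (hT.2 ⟨Ideal.IsPrime.comap f, Ideal.map_le_iff_le_comap.mp hTQ⟩ ?_)
    exact (Ideal.comap_mono (hQm.trans hm.le)).trans (comap_maximalIdeal_eq hm).le
  rw [← IsLocalRing.maximalIdeal_height_eq_ringKrullDim]
  refine le_trans (WithBot.coe_le_coe.mpr ?_)
    (Ideal.height_le_ringKrullDim_of_ne_top (I := m) Ideal.IsPrime.ne_top')
  calc (IsLocalRing.maximalIdeal S).height
    _ ≤ (T.image f).card := Ideal.height_le_card_of_mem_minimalPrimes_span_finset hmin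
    _ ≤ T.card := by exact_mod_cast Finset.card_image_le
    _ = m.height := hcard

lemma ringKrullDim_quotient_map_le (hm : m.map f = IsLocalRing.maximalIdeal S) (a : Ideal R) :
    ringKrullDim (S ⧸ a.map f) ≤ ringKrullDim (R ⧸ a) := by
  obtain htop | htop := eq_or_ne (a.map f) ⊤
  · have := Ideal.Quotient.subsingleton_iff.mpr htop
    rw [ringKrullDim_eq_bot_of_subsingleton]
    exact bot_le
  have := Ideal.Quotient.nontrivial_iff.mpr htop
  have : IsLocalRing (S ⧸ a.map f) :=
    IsLocalRing.of_surjective' (Ideal.Quotient.mk _) Ideal.Quotient.mk_surjective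
  have ham : a ≤ m := (Ideal.map_le_iff_le_comap.mp (IsLocalRing.le_maximalIdeal htop)).trans
    (comap_maximalIdeal_eq hm).le
  have : (m.map (Ideal.Quotient.mk a)).IsMaximal :=
    Ideal.IsMaximal.map_of_surjective_of_ker_le Ideal.Quotient.mk_surjective
      (Ideal.mk_ker.trans_le ham)
  refine ringKrullDim_le_of_map_eq_maximalIdeal (m := m.map (Ideal.Quotient.mk a))
    (f := Ideal.quotientMap (a.map f) f Ideal.le_comap_map) ?_
  rw [Ideal.map_map, Ideal.quotientMap_comp_mk, ← Ideal.map_map, hm]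
  exact IsLocalRing.map_maximalIdeal_of_surjective _ Ideal.Quotient.mk_surjective

end Dimension

section BaseChange

open TensorProduct

variable {R S : Type*} [CommRing R] [CommRing S] [Algebra R S] {m : Ideal R} {D : Type*}
  [AddCommGroup D] [Module R D]

lemma IsPowerTorsion.mk_one_injective [Module.Flat R S] [hmax : m.IsMaximal]
    (hm : m.map (algebraMap R S) ≠ ⊤) (hD : IsPowerTorsion m D) :
    Function.Injective (TensorProduct.mk R S D 1) := by
  rw [injective_iff_map_eq_zero]
  intro d hd
  by_contra hd0
  obtain ⟨k, hk⟩ := hD d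
  let I : Ideal R := Ideal.torsionOf R D d
  have hIm : I ≤ m := by
    obtain ⟨n, hn, hIn⟩ := Ideal.exists_le_maximal I (mt (Ideal.torsionOf_eq_top_iff R d).mp hd0)
    have hmn : m ≤ n := Ideal.IsPrime.le_of_pow_le (fun r hr ↦ hIn (hk r hr) : m ^ k ≤ n)
    exact hIn.trans (hmax.eq_of_le hn.ne_top hmn).ge
  let g : (R ⧸ I) →ₗ[R] D := Submodule.liftQ I (LinearMap.toSpanSingleton R D d) le_rfl
  have hg : Function.Injective g := by
    rw [← LinearMap.ker_eq_bot]
    exact Submodule.ker_liftQ_eq_bot _ _ _ le_rfl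
  have hone : (1 : S) ⊗ₜ[R] (Ideal.Quotient.mk I 1) = 0 := by
    apply Module.Flat.lTensor_preserves_injective_linearMap (M := S) g hg
    rw [map_zero, LinearMap.lTensor_tmul]
    exact (congrArg ((1 : S) ⊗ₜ[R] ·) (one_smul R d)).trans hd
  have hIS : I.map (algebraMap R S) = ⊤ := by
    have hmk := TensorProduct.tensorQuotEquivQuotSMul_tmul_mk I (1 : S) (1 : R)
    rw [hone, map_zero, one_smul, eq_comm, Submodule.Quotient.mk_eq_zero,
      Ideal.smul_top_eq_map] at hmk
    exact (Ideal.eq_top_iff_one _).mpr hmk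
  exact hm (top_le_iff.mp (hIS ▸ Ideal.map_mono hIm))

variable (happrox : ∀ (k : ℕ) (s : S),
  ∃ r : R, s - algebraMap R S r ∈ (m.map (algebraMap R S)) ^ k)

include happrox

lemma IsPowerTorsion.exists_smul_eq_smul (hD : IsPowerTorsion m D) (s : S) (z : S ⊗[R] D) :
    ∃ r : R, s • z = r • z := by
  obtain ⟨k, hk⟩ := hD.baseChange S z
  obtain ⟨r, hr⟩ := happrox k s
  have hsub := hk _ hr
  rw [sub_smul, sub_eq_zero, algebraMap_smul] at hsub
  exact ⟨r, hsub⟩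

lemma IsPowerTorsion.mk_one_surjective (hD : IsPowerTorsion m D) :
    Function.Surjective (TensorProduct.mk R S D 1) := by
  refine LinearMap.range_eq_top.mp (eq_top_iff.mpr ?_)
  rw [← TensorProduct.span_tmul_eq_top, Submodule.span_le]
  rintro _ ⟨s, d, rfl⟩
  obtain ⟨r, hr⟩ := hD.exists_smul_eq_smul happrox s (1 ⊗ₜ[R] d)
  refine ⟨r • d, ?_⟩
  rw [map_smul, TensorProduct.mk_apply, ← hr, TensorProduct.smul_tmul', smul_eq_mul, mul_one]

lemma IsPowerTorsion.fg_restrictScalars_baseChange (hD : IsPowerTorsion m D)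
    {V : Submodule S (S ⊗[R] D)} (hV : V.FG) : (V.restrictScalars R).FG := by
  obtain ⟨T, rfl⟩ := hV
  refine ⟨T, le_antisymm (Submodule.span_le_restrictScalars R S _) fun z hz ↦ ?_⟩
  induction hz using Submodule.span_induction with
  | mem x hx => exact Submodule.subset_span hx
  | zero => exact Submodule.zero_mem _
  | add x y _ _ hx hy => exact Submodule.add_mem _ hx hy
  | smul s x _ hx =>
    obtain ⟨r, hr⟩ := hD.exists_smul_eq_smul happrox s x
    rw [hr]
    exact Submodule.smul_mem _ r hx

lemma IsMinimalNonFinite.baseChange [IsNoetherianRing R] [Module.Flat R S] [m.IsMaximal]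
    (hm : m.map (algebraMap R S) ≠ ⊤) (hD : IsPowerTorsion m D) (h : IsMinimalNonFinite R D) :
    IsMinimalNonFinite S (S ⊗[R] D) := by
  refine ⟨fun hfin ↦ h.1 ?_, fun V hV ↦ ?_⟩
  · have : Module.Finite R (S ⊗[R] D) := ⟨hD.fg_restrictScalars_baseChange happrox hfin.fg_top⟩
    exact Module.Finite.of_injective (TensorProduct.mk R S D 1) (hD.mk_one_injective hm)
  · have hsurj := hD.mk_one_surjective happrox
    let U : Submodule R D := (V.restrictScalars R).comap (TensorProduct.mk R S D 1)
    have hU : U ≠ ⊤ := fun htop ↦ hV <| eq_top_iff.mpr fun z _ ↦ by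
      obtain ⟨d, rfl⟩ := hsurj z
      exact (htop ▸ Submodule.mem_top : d ∈ U)
    refine Submodule.FG.of_restrictScalars R ?_
    rw [← Submodule.map_comap_eq_of_surjective hsurj (V.restrictScalars R)]
    exact (h.2 U hU).map _

end BaseChange

section DimensionTwo

open TensorProduct

lemma exists_mem_ringKrullDim_quotient_sup_span_singleton_le {R : Type*} [CommRing R]
    [IsNoetherianRing R] {a b : Ideal R} {n : ℕ} (ha : ringKrullDim (R ⧸ a) ≤ n + 1)
    (hb : ringKrullDim (R ⧸ b) ≤ n) :
    ∃ y ∈ b, ringKrullDim (R ⧸ a ⊔ Ideal.span {y}) ≤ n := by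
  let T : Set (Ideal R) := {p ∈ a.minimalPrimes | n + 1 ≤ ringKrullDim (R ⧸ p)}
  have hT : T.Finite := (Ideal.finite_minimalPrimes_of_isNoetherianRing R a).subset fun _ hp ↦ hp.1
  have hbT : ∀ p ∈ T, p.IsPrime ∧ ¬ b ≤ p := fun p hp ↦
    ⟨hp.1.1.1, fun hbp ↦ absurd (hp.2.trans ((ringKrullDim_quotient_anti hbp).trans hb))
      (not_le_of_gt (by exact_mod_cast Nat.lt_succ_self n))⟩
  obtain ⟨y, hyb, hy⟩ := exists_mem_forall_notMem hT hbT
  exact ⟨y, hyb, ringKrullDim_quotient_sup_span_singleton_le ha fun p hp hdim ↦ hy p ⟨hp, hdim⟩⟩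

lemma finite_torsionBy_of_injective {R X Y : Type*} [CommRing R] [IsNoetherianRing R]
    [AddCommGroup X] [Module R X] [AddCommGroup Y] [Module R Y] (y : R)
    [Module.Finite R (Submodule.torsionBy R Y y)] {f : X →ₗ[R] Y} (hf : Function.Injective f) :
    Module.Finite R (Submodule.torsionBy R X y) := by
  have hmaps (x : X) (hx : x ∈ Submodule.torsionBy R X y) : f x ∈ Submodule.torsionBy R Y y := by
    rw [Submodule.mem_torsionBy_iff] at hx ⊢
    rw [← map_smul, hx, map_zero]
  exact Module.Finite.of_injective (f.restrict hmaps)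
    fun x x' h ↦ Subtype.ext (hf (congrArg Subtype.val h))

lemma finite_torsionBy_baseChange_quotient {R S X : Type u} [CommRing R] [CommRing S]
    [Algebra R S] [IsNoetherianRing S] [AddCommGroup X] [Module R X] {F : Submodule R X}
    (hF : F.FG) (y : S) [Module.Finite S (Submodule.torsionBy S (S ⊗[R] X) y)] :
    Module.Finite S (Submodule.torsionBy S (S ⊗[R] (X ⧸ F)) y) := by
  let π : S ⊗[R] X →ₗ[S] S ⊗[R] (X ⧸ F) := F.mkQ.baseChange S
  have hπ : Function.Surjective π := LinearMap.lTensor_surjective S F.mkQ_surjective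
  have hexact : Function.Exact (F.subtype.baseChange S) π :=
    lTensor_exact S (LinearMap.exact_subtype_mkQ F) F.mkQ_surjective
  have hker : (LinearMap.ker π).FG := by
    have : Module.Finite R F := Module.Finite.iff_fg.mpr hF
    rw [hexact.linearMap_ker_eq]
    exact Module.Finite.iff_fg.mp inferInstance
  have := finite_torsionBy_quotient hker y
  exact finite_torsionBy_of_injective y (f := (π.quotKerEquivOfSurjective hπ).symm.toLinearMap)
    (π.quotKerEquivOfSurjective hπ).symm.injective

lemma isLocalRing_adicCompletion {R : Type*} [CommRing R] [IsNoetherianRing R] (m : Ideal R)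
    [m.IsMaximal] : IsLocalRing (AdicCompletion m R) :=
  have := AdicCompletion.isAdicComplete_self m (IsNoetherian.noetherian m)
  have := AdicCompletion.isMaximal_map_of_le m m le_rfl (IsNoetherian.noetherian m)
  isLocalRing_of_isAdicComplete_maximal (m.map (algebraMap R (AdicCompletion m R)))

variable {R : Type u} [CommRing R] [IsNoetherianRing R] {a : Ideal R} {M : Type u}
  [AddCommGroup M] [Module R M]

lemma finite_torsionBy_baseChange_ext (S : Type u) [CommRing S] [IsNoetherianRing S] [Algebra R S]
    [Module.Flat R S] {y : S}
    (hy : ringKrullDim (S ⧸ a.map (algebraMap R S) ⊔ Ideal.span {y}) ≤ 1)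
    (hM : IsPowerTorsion a M) (h : ∀ i ≤ 2, Module.Finite R (ExtModule R (R ⧸ a) M i)) (i : ℕ) :
    Module.Finite S (Submodule.torsionBy S (S ⊗[R] ExtModule R (R ⧸ a) M i) y) := by
  have := finite_torsionBy_ext hy (hM.baseChange S)
    (fun i hi ↦ finite_quotient_baseChange S M (h i hi)) i
  obtain ⟨e⟩ := nonempty_baseChange_quotient_linearEquiv S M a i
  exact finite_torsionBy_of_injective y (f := e.toLinearMap) e.injective

lemma not_isMinimalNonFinite_of_submodule_quotient_ext (ha : ringKrullDim (R ⧸ a) ≤ 2)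
    (hM : IsPowerTorsion a M) (h : ∀ i ≤ 2, Module.Finite R (ExtModule R (R ⧸ a) M i)) {i : ℕ}
    {F : Submodule R (ExtModule R (R ⧸ a) M i)} (hF : F.FG)
    (D : Submodule R (ExtModule R (R ⧸ a) M i ⧸ F)) {m : Ideal R} [m.IsMaximal]
    (hDm : IsPowerTorsion m D) : ¬ IsMinimalNonFinite R D := by
  intro hD
  let S := AdicCompletion m R
  have hm : m.FG := IsNoetherian.noetherian m
  have : IsNoetherianRing S := isNoetherianRing_adicCompletion m
  have : IsLocalRing S := isLocalRing_adicCompletion m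
  have hmS : m.map (algebraMap R S) = IsLocalRing.maximalIdeal S :=
    IsLocalRing.eq_maximalIdeal (AdicCompletion.isMaximal_map_of_le m m le_rfl hm)
  have : IsAdicComplete (IsLocalRing.maximalIdeal S) S :=
    hmS ▸ AdicCompletion.isAdicComplete_self m hm
  have : Module.Flat R S := AdicCompletion.flat_of_isNoetherian m
  have hSD : IsMinimalNonFinite S (S ⊗[R] D) :=
    hD.baseChange (exists_sub_algebraMap_mem_map_pow hm)
      (hmS ▸ (IsLocalRing.maximalIdeal.isMaximal S).ne_top) hDm
  have hann : ringKrullDim (S ⧸ Module.annihilator S (S ⊗[R] D)) ≤ 1 :=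
    hSD.ringKrullDim_quotient_annihilator_le_one (hmS ▸ hDm.baseChange S)
  obtain ⟨y, hyD, hy⟩ := exists_mem_ringKrullDim_quotient_sup_span_singleton_le (n := 1)
    ((ringKrullDim_quotient_map_le hmS a).trans ha) hann
  have := finite_torsionBy_baseChange_ext S hy hM h i
  have := finite_torsionBy_baseChange_quotient hF y
  have hfinite : Module.Finite S (Submodule.torsionBy S (S ⊗[R] D) y) :=
    finite_torsionBy_of_injective y (f := D.subtype.baseChange S)
      (Module.Flat.lTensor_preserves_injective_linearMap D.subtype D.subtype_injective)
  have htop : Submodule.torsionBy S (S ⊗[R] D) y = ⊤ :=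
    eq_top_iff.mpr fun z _ ↦ (Submodule.mem_torsionBy_iff y z).mpr (Module.mem_annihilator.mp hyD z)
  exact hSD.1 (Module.finite_def.mpr (htop ▸ Module.Finite.iff_fg.mp hfinite))

theorem finite_ext_of_ringKrullDim_le_two (ha : ringKrullDim (R ⧸ a) ≤ 2)
    (hM : IsPowerTorsion a M) (h : ∀ i ≤ 2, Module.Finite R (ExtModule R (R ⧸ a) M i)) (i : ℕ) :
    Module.Finite R (ExtModule R (R ⧸ a) M i) := by
  obtain ⟨F, hF, hQ⟩ := exists_fg_isArtinian_quotient_ext ha hM h i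
  have : Module.Finite R (ExtModule R (R ⧸ a) M i ⧸ F) := by
    by_contra hinfinite
    obtain ⟨D, hD⟩ := exists_isMinimalNonFinite_submodule hinfinite
    obtain ⟨m, hm, hDm⟩ := hD.exists_isMaximal_isPowerTorsion
    exact not_isMinimalNonFinite_of_submodule_quotient_ext ha hM h hF D hDm hD
  have : Module.Finite R F := Module.Finite.iff_fg.mpr hF
  exact Module.Finite.of_submodule_quotient F

end DimensionTwo

lemma isPowerTorsion_of_support_subset_zeroLocus {R M : Type*} [CommRing R] [AddCommGroup M]
    [Module R M] {a : Ideal R} (ha : a.FG)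
    (h : Module.support R M ⊆ PrimeSpectrum.zeroLocus (a : Set R)) : IsPowerTorsion a M := by
  intro m
  have hle : a ≤ (Submodule.span R {m}).annihilator.radical := by
    rw [Ideal.radical_eq_sInf]
    exact le_sInf fun p hp ↦
      h (a := ⟨p, hp.2⟩) (Module.mem_support_iff_exists_annihilator.mpr ⟨m, hp.1⟩)
  obtain ⟨n, hn⟩ := Ideal.exists_pow_le_of_le_radical_of_fg hle ha
  exact ⟨n, fun r hr ↦ (Submodule.mem_annihilator_span_singleton m r).mp (hn hr)⟩

section DerivedFunctorExt

open CochainComplex.HomComplex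

variable {R : Type u} [CommRing R] {X Y : ModuleCat.{u} R} (P : ProjectiveResolution X)

lemma eq_zero_of_extMk_zero_eq_zero {f : P.complex.X 0 ⟶ Y} (hf : P.complex.d 1 0 ≫ f = 0)
    (h : P.extMk f 1 rfl hf = 0) : f = 0 := by
  rw [← P.extEquivCohomologyClass.apply_eq_iff_eq,
    ProjectiveResolution.extEquivCohomologyClass_extMk,
    ProjectiveResolution.extEquivCohomologyClass_zero, CohomologyClass.mk_eq_zero_iff,
    Cocycle.toSingleMk_mem_coboundaries_iff _ _ _ _ _ 1 (by lia)] at h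
  obtain ⟨g, hg⟩ := h
  have hzero : Limits.IsZero (P.cochainComplex.X 1) :=
    CochainComplex.isZero_of_isStrictlyLE _ 0 1
  rw [hzero.eq_of_src g 0, Limits.comp_zero] at hg
  exact (cancel_epi (P.cochainComplexXIso (-(0 : ℕ)) 0 rfl).hom).mp
    (hg.symm.trans Limits.comp_zero.symm)

lemma extMk_smul {n : ℕ} (r : R) {f : P.complex.X n ⟶ Y} (hf : P.complex.d (n + 1) n ≫ f = 0)
    (hf' : P.complex.d (n + 1) n ≫ (r • f) = 0) :
    P.extMk (r • f) (n + 1) rfl hf' = r • P.extMk f (n + 1) rfl hf := by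
  rw [Abelian.Ext.smul_eq_comp_mk₀, ProjectiveResolution.extMk_comp_mk₀]
  congr 1

lemma extMk_eq_zero_iff_mem_range {n : ℕ} {f : P.complex.X n ⟶ Y}
    (hf : P.complex.d (n + 1) n ≫ f = 0) :
    P.extMk f (n + 1) rfl hf = 0 ↔
      f ∈ LinearMap.range
        ((P.complex.linearYonedaObj R Y).d ((ComplexShape.up ℕ).prev n) n).hom := by
  cases n with
  | zero =>
    have hd : (P.complex.linearYonedaObj R Y).d ((ComplexShape.up ℕ).prev 0) 0 = 0 :=
      (P.complex.linearYonedaObj R Y).shape _ _ (by simp)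
    rw [hd, ModuleCat.hom_zero, LinearMap.range_zero]
    refine Iff.trans ⟨eq_zero_of_extMk_zero_eq_zero P hf, ?_⟩ (Submodule.mem_bot R).symm
    rintro rfl
    exact P.extMk_zero 1 rfl
  | succ p =>
    rw [CochainComplex.prev_nat_succ]
    exact P.extMk_eq_zero_iff f _ rfl hf p rfl

/-- The map from the degree `n` cocycles of `Hom(P, Y)`, for a projective resolution `P` of `X`, to
`Ext` in the derived category. It compares that `Ext` with the left derived functors
of `Hom`, which are the cohomology of `Hom(P, Y)`. -/
noncomputable def cocyclesToExt (Y : ModuleCat.{u} R) (n : ℕ) :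
    LinearMap.ker ((P.complex.linearYonedaObj R Y).sc' ((ComplexShape.up ℕ).prev n) n (n + 1)).g.hom
      →ₗ[R] Abelian.Ext X Y n where
  toFun f := P.extMk (Y := Y) f.1 (n + 1) rfl f.2
  map_add' f g := (P.add_extMk (Y := Y) f.1 g.1 _ rfl f.2 g.2).symm
  map_smul' r f := extMk_smul (Y := Y) P r f.2 (r • f).2

lemma cocyclesToExt_surjective (n : ℕ) : Function.Surjective (cocyclesToExt P Y n) := by
  intro α
  obtain ⟨f, hf, rfl⟩ := P.extMk_surjective α (n + 1) rfl
  exact ⟨⟨f, hf⟩, rfl⟩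

lemma ker_cocyclesToExt (n : ℕ) :
    LinearMap.ker (cocyclesToExt P Y n) =
      LinearMap.range ((P.complex.linearYonedaObj R Y).sc' ((ComplexShape.up ℕ).prev n) n
        (n + 1)).moduleCatToCycles := by
  ext f
  rw [LinearMap.mem_ker, LinearMap.mem_range]
  refine (extMk_eq_zero_iff_mem_range (Y := Y) P f.2).trans (exists_congr fun g ↦ ?_)
  exact ⟨fun h ↦ Subtype.ext h, congrArg Subtype.val⟩

lemma finite_ext_obj_iff (n : ℕ) :
    Module.Finite R (((Ext R (ModuleCat.{u} R) n).obj (Opposite.op X)).obj Y) ↔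
      Module.Finite R (Abelian.Ext X Y n) := by
  let P := ProjectiveResolution.of X
  let K := P.complex.linearYonedaObj R Y
  let e : ((Ext R (ModuleCat.{u} R) n).obj (Opposite.op X)).obj Y ≅
      (K.sc' ((ComplexShape.up ℕ).prev n) n (n + 1)).moduleCatLeftHomologyData.H :=
    P.isoExt n Y ≪≫ ShortComplex.homologyMapIso (K.isoSc' _ n (n + 1) rfl (by simp)) ≪≫
      ShortComplex.moduleCatHomologyIso _
  let e' := (Submodule.quotEquivOfEq _ _ (ker_cocyclesToExt P (Y := Y) n)).symm.trans
    ((cocyclesToExt P Y n).quotKerEquivOfSurjective (cocyclesToExt_surjective P n))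
  exact Module.Finite.equiv_iff (e.toLinearEquiv.trans e')

end DerivedFunctorExt

end Cofiniteness

theorem stmt1 {R : Type u} [CommRing R] [IsNoetherianRing R] (a : Ideal R) (ha : a ≠ ⊤)
    (hdim : ringKrullDim (R ⧸ a) ≤ 2) (M : ModuleCat.{u} R)
    (hsupp : Module.support R M ⊆ PrimeSpectrum.zeroLocus (a : Set R)) :
    IsCofinite a M ↔
      (Module.Finite R (extQuot a 0 M) ∧ Module.Finite R (extQuot a 1 M) ∧
        Module.Finite R (extQuot a 2 M)) := by
  refine ⟨fun h ↦ ⟨h.2 0, h.2 1, h.2 2⟩, fun ⟨h₀, h₁, h₂⟩ ↦ ⟨hsupp, fun i ↦ ?_⟩⟩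
  have hM : Cofiniteness.IsPowerTorsion a M :=
    Cofiniteness.isPowerTorsion_of_support_subset_zeroLocus (IsNoetherian.noetherian a) hsupp
  refine (Cofiniteness.finite_ext_obj_iff i).mpr
    (Cofiniteness.finite_ext_of_ringKrullDim_le_two hdim hM (fun j hj ↦ ?_) i)
  refine (Cofiniteness.finite_ext_obj_iff j).mp ?_
  interval_cases j
  exacts [h₀, h₁, h₂]
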